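/- arXiv:1112.5415 — 2 statements merged into one kernel-verified Lean document; each statement's English description precedes it below -/
import Mathlib

section
/- The set of real numbers {B(α,ρ) : α∈Δ, ρ∈Φ⁺, |B(α,ρ)| < 1} is finite. -/
open Filter Topology

noncomputable section

variable {ι V : Type*} [Fintype ι] [NormedAddCommGroup V] [NormedSpace ℝ V]

/-- The set of simple `B`-reflections: the linear automorphisms of `V` given by the
`B`-reflection formula `u ↦ u - 2 (B α u / B α α) • α` associated to a simple root `α ∈ Δ`. -/
def simpleReflections (B : LinearMap.BilinForm ℝ V) (Δ : Module.Basis ι ℝ V) :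
    Set (V ≃ₗ[ℝ] V) :=
  { e | ∃ i : ι, ∀ u : V, e u = u - (2 * B (Δ i) u / B (Δ i) (Δ i)) • Δ i }

/-- The geometric Coxeter group `W`: the subgroup of linear automorphisms of `V`
generated by the simple `B`-reflections. -/
def cox (B : LinearMap.BilinForm ℝ V) (Δ : Module.Basis ι ℝ V) : Subgroup (V ≃ₗ[ℝ] V) :=
  Subgroup.closure (simpleReflections B Δ)

/-- The root system `Φ = W ⬝ Δ`. -/
def Phi (B : LinearMap.BilinForm ℝ V) (Δ : Module.Basis ι ℝ V) : Set V :=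
  { ρ | ∃ w ∈ cox B Δ, ∃ i : ι, w (Δ i) = ρ }

/-- The positive roots `Φ⁺ = Φ ∩ cone(Δ)`. -/
def posPhi (B : LinearMap.BilinForm ℝ V) (Δ : Module.Basis ι ℝ V) : Set V :=
  { ρ ∈ Phi B Δ | ∀ i : ι, 0 ≤ Δ.repr ρ i }

/-- `|v|₁`: the sum of the coordinates of `v` in the basis `Δ`. -/
def l1 (Δ : Module.Basis ι ℝ V) (v : V) : ℝ := ∑ i : ι, Δ.repr v i

/-- The normalization map `v ↦ v̂ = v / |v|₁`. -/
def nrm (Δ : Module.Basis ι ℝ V) (v : V) : V := (l1 Δ v)⁻¹ • v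

/-- The set `Φ̂` of normalized roots. -/
def nPhi (B : LinearMap.BilinForm ℝ V) (Δ : Module.Basis ι ℝ V) : Set V :=
  nrm Δ '' posPhi B Δ

/-- `E(Φ)`: the set of accumulation points of the set of normalized roots. -/
def Eset (B : LinearMap.BilinForm ℝ V) (Δ : Module.Basis ι ℝ V) : Set V :=
  { x | AccPt x (𝓟 (nPhi B Δ)) }

/-- The isotropic cone `Q` of `B`. -/
def isoQ (B : LinearMap.BilinForm ℝ V) : Set V := { v | B v v = 0 }

/-- The reflection along a unit vector. -/
def rf (B : LinearMap.BilinForm ℝ V) (a : V) : Module.End ℝ V :=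
  LinearMap.id - (2 : ℝ) • (B a).smulRight a

lemma rf_apply (B : LinearMap.BilinForm ℝ V) (a v : V) : rf B a v = v - (2 * B a v) • a := by
  simp [rf, smul_smul]

lemma rot (B : LinearMap.BilinForm ℝ V) (hsymm : ∀ u v : V, B u v = B v u) (a b : V)
    (haa : B a a = 1) (hbb : B b b = 1) (c s : ℝ) (hc : B a b = c) (hs : s ^ 2 + c ^ 2 = 1)
    (hs0 : s ≠ 0) :
    ∃ (φ : V →ₗ[ℝ] ℂ) (ψ : ℂ →ₗ[ℝ] V), φ a = 1 ∧ ψ 1 = a ∧ (∃ u, b = ψ u) ∧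
      (∀ u, φ (ψ u) = u) ∧
      ∀ (k : ℕ) (v : V), ((rf B a * rf B b) ^ k) v
        = v + ψ (((((c : ℂ) - s * Complex.I) ^ 2) ^ k - 1) * φ v) := by
  have hba : B b a = c := by rw [hsymm, hc]
  let φ : V →ₗ[ℝ] ℂ :=
    { toFun := fun v => ⟨B a v, (B b v - c * B a v) / s⟩
      map_add' := by intro x y; apply Complex.ext <;> simp; ring
      map_smul' := by intro r x; apply Complex.ext <;> simp; ring }
  let ψ : ℂ →ₗ[ℝ] V :=
    { toFun := fun u => u.re • a + (u.im / s) • (b - c • a)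
      map_add' := by intro x y; simp only [Complex.add_re, Complex.add_im]; module
      map_smul' := by
        intro r x
        simp only [Complex.real_smul, Complex.mul_re, Complex.mul_im, Complex.ofReal_re,
          Complex.ofReal_im, RingHom.id_apply]
        match_scalars <;> ring }
  have hφ : ∀ v, φ v = ⟨B a v, (B b v - c * B a v) / s⟩ := fun _ => rfl
  have hψ : ∀ u, ψ u = u.re • a + (u.im / s) • (b - c • a) := fun _ => rfl
  have h1 : ∀ u, φ (ψ u) = u := by
    intro u
    rw [hφ, hψ]
    apply Complex.ext
    · simp [haa, hc]
    · simp [haa, hc, hba, hbb]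
      field_simp
      linear_combination (u.im) * (-hs)
  have hstep : ∀ v, (rf B a * rf B b) v = v + ψ ((((c : ℂ) - s * Complex.I) ^ 2 - 1) * φ v) := by
    intro v
    rw [Module.End.mul_apply, rf_apply, rf_apply, hψ, hφ]
    have hs2 : c ^ 2 = 1 - s ^ 2 := by linarith
    obtain ⟨d, hd⟩ : ∃ d, d = (B b v - c * B a v) / s := ⟨_, rfl⟩
    have hbv : B b v = s * d + c * B a v := by rw [hd]; field_simp; ring
    have e : (((c : ℂ) - s * Complex.I) ^ 2 - 1) * (⟨B a v, (B b v - c * B a v) / s⟩ : ℂ)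
        = ⟨-2 * s ^ 2 * B a v + 2 * c * s * d, s * (-2 * s * d - 2 * c * B a v)⟩ := by
      rw [← hd]
      apply Complex.ext
      · simp [pow_two]; linear_combination (B a v) * hs2
      · simp [pow_two]; linear_combination d * hs2
    rw [e]
    simp only [map_sub, map_smul, hc, smul_eq_mul, mul_div_cancel_left₀ _ hs0, hbv]
    match_scalars
    · ring
    · ring
    · linear_combination (2 * B a v) * hs2
  refine ⟨φ, ψ, ?_, ?_, ⟨⟨c, s⟩, ?_⟩, h1, ?_⟩
  · rw [hφ]; apply Complex.ext <;> simp [haa, hba]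
  · rw [hψ]; simp
  · rw [hψ]; simp [div_self hs0]
  · intro k v
    induction k with
    | zero => simp
    | succ k ih =>
      rw [pow_succ', Module.End.mul_apply, ih, hstep]
      rw [add_assoc, ← map_add]
      congr 2
      rw [map_add, h1]
      ring

/-- Chebyshev-like sequence. -/
def pseq (x : ℝ) : ℕ → ℝ
  | 0 => 0
  | 1 => 1
  | (k + 2) => 2 * x * pseq x (k + 1) - pseq x k

lemma pseq_of_one_le (x : ℝ) (hx : 1 ≤ x) (k : ℕ) : 0 ≤ pseq x k ∧ pseq x k ≤ pseq x (k + 1) := by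
  induction k with
  | zero => simp [pseq]
  | succ k ih =>
    obtain ⟨h1, h2⟩ := ih
    refine ⟨h1.trans h2, ?_⟩
    rw [pseq]
    nlinarith

lemma pseq_cos (θ : ℝ) (k : ℕ) : pseq (Real.cos θ) k * Real.sin θ = Real.sin (k * θ) ∧
    pseq (Real.cos θ) (k + 1) * Real.sin θ = Real.sin ((k + 1) * θ) := by
  induction k with
  | zero => simp [pseq]
  | succ k ih =>
    obtain ⟨h1, h2⟩ := ih
    refine ⟨by push_cast; exact h2, ?_⟩
    rw [pseq, sub_mul, mul_assoc, h2, h1]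
    push_cast
    have e1 : ((k : ℝ) + 1 + 1) * θ = (k + 1) * θ + θ := by ring
    have e2 : (k : ℝ) * θ = (k + 1) * θ - θ := by ring
    rw [e1, e2, Real.sin_add, Real.sin_sub]
    ring

lemma pseq_cos_nonneg (m k : ℕ) (hm : 2 ≤ m) (hk : k ≤ m) :
    0 ≤ pseq (Real.cos (Real.pi / m)) k := by
  have hm' : (2 : ℝ) ≤ m := by exact_mod_cast hm
  have hk' : (k : ℝ) ≤ m := by exact_mod_cast hk
  have hs : 0 < Real.sin (Real.pi / m) := by
    apply Real.sin_pos_of_pos_of_lt_pi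
    · have := Real.pi_pos; positivity
    · apply div_lt_self Real.pi_pos; linarith
  have h := (pseq_cos (Real.pi / m) k).1
  have h2 : 0 ≤ Real.sin (k * (Real.pi / m)) := by
    apply Real.sin_nonneg_of_nonneg_of_le_pi
    · have := Real.pi_pos; positivity
    · have := Real.pi_pos
      rw [← mul_div_assoc, div_le_iff₀ (by linarith)]
      nlinarith
  rw [← h] at h2
  exact nonneg_of_mul_nonneg_left h2 hs

/-- nonnegative coordinates -/
def Pos (Δ : Module.Basis ι ℝ V) (v : V) : Prop := ∀ i, 0 ≤ Δ.repr v i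

lemma Pos.comb {Δ : Module.Basis ι ℝ V} {u v : V} (hu : Pos Δ u) (hv : Pos Δ v) {a b : ℝ}
    (ha : 0 ≤ a) (hb : 0 ≤ b) : Pos Δ (a • u + b • v) := by
  intro i
  have := hu i
  have := hv i
  simp only [map_add, map_smul, Finsupp.add_apply, Finsupp.smul_apply, smul_eq_mul]
  positivity

lemma pos_simple (Δ : Module.Basis ι ℝ V) (i : ι) : Pos Δ (Δ i) := by
  classical
  intro j
  simp only [Module.Basis.repr_self, Finsupp.single_apply]
  split_ifs <;> norm_num

section cox

variable {B : LinearMap.BilinForm ℝ V} {Δ : Module.Basis ι ℝ V} {M : CoxeterMatrix ι}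
  {W : Type*} [Group W] (cs : CoxeterSystem M W) (R : W →* Module.End ℝ V)

lemma alt_apply (hsymm : ∀ u v : V, B u v = B v u)
    (hdiag : ∀ i : ι, B (Δ i) (Δ i) = 1) (hR : ∀ i, R (cs.simple i) = rf B (Δ i))
    (s t : ι) (k : ℕ) :
    R (cs.wordProd (CoxeterSystem.alternatingWord s t k)) (Δ s) =
      pseq (-B (Δ s) (Δ t)) (k + 1) • Δ (if Even k then s else t)
        + pseq (-B (Δ s) (Δ t)) k • Δ (if Even k then t else s) := by
  induction k with
  | zero => simp [CoxeterSystem.alternatingWord, pseq]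
  | succ k ih =>
    rw [CoxeterSystem.alternatingWord_succ', CoxeterSystem.wordProd_cons, map_mul,
      Module.End.mul_apply, ih, hR, rf_apply, pseq]
    have hts := hsymm (Δ t) (Δ s)
    by_cases hk : Even k
    · have hk' : ¬ Even (k + 1) := by simp [hk, parity_simps]
      simp only [hk, hk', if_true, if_false, map_add, map_smul, hdiag, smul_eq_mul, hts]
      module
    · have hk' : Even (k + 1) := by simp [hk, parity_simps]
      simp only [hk, hk', if_true, if_false, map_add, map_smul, hdiag, smul_eq_mul]
      module

lemma key_pos (hsymm : ∀ u v : V, B u v = B v u)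
    (hdiag : ∀ i : ι, B (Δ i) (Δ i) = 1) (hR : ∀ i, R (cs.simple i) = rf B (Δ i))
    (hM : ∀ i j, i ≠ j → (M i j = 0 ∧ B (Δ i) (Δ j) ≤ -1) ∨
      (2 ≤ M i j ∧ B (Δ i) (Δ j) = -Real.cos (Real.pi / (M i j : ℕ)))) (n : ℕ) :
    ∀ w : W, cs.length w = n → ∀ s, cs.length w < cs.length (w * cs.simple s) →
      Pos Δ (R w (Δ s)) := by
  classical
  induction n using Nat.strong_induction_on with
  | _ n ih =>
  intro w hw s hs
  by_cases hw1 : w = 1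
  · subst hw1; simpa using pos_simple Δ s
  obtain ⟨t, ht⟩ := cs.exists_rightDescent_of_ne_one hw1
  have hst : s ≠ t := by
    rintro rfl
    exact absurd ht (by unfold CoxeterSystem.IsRightDescent; omega)
  set A : ℕ → W := fun k => cs.wordProd (CoxeterSystem.alternatingWord s t k) with hA
  let P : ℕ → Prop := fun k => cs.length (w * (A k)⁻¹) + k = n
  have hA0 : A 0 = 1 := by simp [hA, CoxeterSystem.alternatingWord]
  have hAs : ∀ k, A (k + 1) = cs.simple (if Even k then t else s) * A k := by
    intro k
    simp only [hA]
    rw [CoxeterSystem.alternatingWord_succ', CoxeterSystem.wordProd_cons]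
  have hP1 : P 1 := by
    have h := (cs.isRightDescent_iff).1 ht
    simp only [P, hAs 0, hA0]
    simp [h, hw]
  have hPb : ∀ k, P k → k ≤ n := by intro k hk; simp only [P] at hk; omega
  have hn1 : 1 ≤ n := hPb 1 hP1
  let k := Nat.findGreatest P n
  have hk : P k := Nat.findGreatest_spec hn1 hP1
  have hk1 : 1 ≤ k := Nat.le_findGreatest hn1 hP1
  have hkmax : ¬ P (k + 1) := fun h =>
    Nat.findGreatest_is_greatest (Nat.lt_succ_self k) (hPb _ h) h
  set v := w * (A k)⁻¹ with hv
  have hwv : w = v * A k := by simp [hv]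
  have hlv : cs.length v + k = n := hk
  -- the new letter
  have hb : cs.length v < cs.length (v * cs.simple (if Even k then t else s)) := by
    by_contra hcon
    have h := (cs.isRightDescent_iff).1 (lt_of_le_of_ne (not_lt.1 hcon) (cs.length_mul_simple_ne _ _))
    apply hkmax
    simp only [P, hAs k, mul_inv_rev, cs.inv_simple, ← mul_assoc]
    rw [← hv]
    omega
  have ha : cs.length v < cs.length (v * cs.simple (if Even k then s else t)) := by
    obtain ⟨j, hj⟩ : ∃ j, k = j + 1 := ⟨k - 1, by omega⟩
    have h1 : (if Even k then s else t) = (if Even j then t else s) := by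
      rw [hj]; by_cases hj : Even j <;> simp [hj, parity_simps]
    have h2 : v * cs.simple (if Even k then s else t) * A j = w := by
      rw [h1, mul_assoc, ← hAs, ← hj, ← hwv]
    have h3 := cs.length_mul_le (v * cs.simple (if Even k then s else t)) (A j)
    have h4 := cs.length_wordProd_le (CoxeterSystem.alternatingWord s t j)
    rw [CoxeterSystem.length_alternatingWord] at h4
    rw [h2] at h3
    have : cs.length (A j) ≤ j := h4
    omega
  have pa := ih _ (by omega) v rfl _ ha
  have pb := ih _ (by omega) v rfl _ hb
  rw [hwv, map_mul, Module.End.mul_apply]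
  simp only [hA]
  rw [alt_apply cs R hsymm hdiag hR s t k, map_add, map_smul, map_smul]
  have hnn : 0 ≤ pseq (-B (Δ s) (Δ t)) (k + 1) ∧ 0 ≤ pseq (-B (Δ s) (Δ t)) k := by
    rcases hM s t hst with ⟨-, h⟩ | ⟨h2, h⟩
    · exact ⟨(pseq_of_one_le _ (by linarith) _).1, (pseq_of_one_le _ (by linarith) _).1⟩
    · have hkm : k < M s t := by
        by_contra hcon
        push Not at hcon
        have hdec : ∀ d, ∃ u : W, A (M s t + d) = u * A (M s t) ∧ cs.length u ≤ d := by
          intro d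
          induction d with
          | zero => exact ⟨1, by simp, by simp⟩
          | succ d ihd =>
            obtain ⟨u, hu1, hu2⟩ := ihd
            refine ⟨cs.simple (if Even (M s t + d) then t else s) * u, ?_, ?_⟩
            · rw [← add_assoc, hAs, hu1, mul_assoc]
            · have := cs.length_mul_le (cs.simple (if Even (M s t + d) then t else s)) u
              rw [cs.length_simple] at this
              omega
        obtain ⟨u, hu1, hu2⟩ := hdec (k - M s t)
        rw [show M s t + (k - M s t) = k by omega] at hu1
        have hbr : A (M s t) = cs.wordProd (CoxeterSystem.alternatingWord s t (M s t - 1)) *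
            cs.simple s := by
          have h5 := cs.wordProd_braidWord_eq s t
          unfold CoxeterSystem.braidWord at h5
          simp only [hA]
          rw [h5, M.symmetric t s]
          obtain ⟨j, hj⟩ : ∃ j, M s t = j + 1 := ⟨M s t - 1, by omega⟩
          rw [hj, CoxeterSystem.alternatingWord_succ, cs.wordProd_concat]
          simp
        have hws : w * cs.simple s =
            v * u * cs.wordProd (CoxeterSystem.alternatingWord s t (M s t - 1)) := by
          rw [hwv, hu1, hbr]; simp [mul_assoc]
        have h6 := cs.length_mul_le (v * u)
          (cs.wordProd (CoxeterSystem.alternatingWord s t (M s t - 1)))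
        have h7 := cs.length_mul_le v u
        have h8 := cs.length_wordProd_le (CoxeterSystem.alternatingWord s t (M s t - 1))
        rw [CoxeterSystem.length_alternatingWord] at h8
        rw [← hws] at h6
        omega
      rw [h, neg_neg]
      exact ⟨pseq_cos_nonneg _ _ h2 (by omega), pseq_cos_nonneg _ _ h2 (by omega)⟩
  exact pa.comb pb hnn.1 hnn.2

lemma pos_or_neg (hsymm : ∀ u v : V, B u v = B v u)
    (hdiag : ∀ i : ι, B (Δ i) (Δ i) = 1) (hR : ∀ i, R (cs.simple i) = rf B (Δ i))
    (hM : ∀ i j, i ≠ j → (M i j = 0 ∧ B (Δ i) (Δ j) ≤ -1) ∨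
      (2 ≤ M i j ∧ B (Δ i) (Δ j) = -Real.cos (Real.pi / (M i j : ℕ)))) (w : W) (i : ι) :
    Pos Δ (R w (Δ i)) ∨ Pos Δ (-R w (Δ i)) := by
  rcases cs.length_mul_simple w i with h | h
  · left
    exact key_pos cs R hsymm hdiag hR hM _ w rfl i (by omega)
  · right
    have := key_pos cs R hsymm hdiag hR hM _ (w * cs.simple i) rfl i (by simp; omega)
    rw [map_mul, Module.End.mul_apply, hR, rf_apply, hdiag, map_sub, map_smul] at this
    convert this using 1
    module

end cox

section abs

variable (B : LinearMap.BilinForm ℝ V) (Δ : Module.Basis ι ℝ V)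

/-- good maps w.r.t. a root set -/
def Good (Rt : Set V) (T : Module.End ℝ V) : Prop :=
  Function.Injective T ∧ (∀ γ ∈ Rt, T γ ∈ Rt) ∧ {δ | δ ∈ Rt ∧ Pos Δ δ ∧ ¬ Pos Δ (T δ)}.Finite

lemma Good.one (Rt : Set V) : Good Δ Rt 1 := by
  refine ⟨fun x y h => h, fun γ h => h, ?_⟩
  convert Set.finite_empty (α := V)
  ext δ
  simp

lemma Good.mul {Rt : Set V} {S T : Module.End ℝ V} (hS : Good Δ Rt S) (hT : Good Δ Rt T) :
    Good Δ Rt (S * T) := by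
  obtain ⟨a1, a2, a3⟩ := hS
  obtain ⟨b1, b2, b3⟩ := hT
  refine ⟨fun x y h => b1 (a1 h), fun γ h => a2 _ (b2 _ h), ?_⟩
  refine (b3.union (a3.preimage b1.injOn)).subset ?_
  rintro δ ⟨h1, h2, h3⟩
  by_cases h : Pos Δ (T δ)
  · right
    exact ⟨b2 _ h1, h, h3⟩
  · left
    exact ⟨h1, h2, h⟩

lemma Good.pow {Rt : Set V} {T : Module.End ℝ V} (hT : Good Δ Rt T) (k : ℕ) :
    Good Δ Rt (T ^ k) := by
  induction k with
  | zero => exact Good.one Δ Rt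
  | succ k ih => rw [pow_succ]; exact ih.mul Δ hT

lemma rf_simple_pos {Rt : Set V} (hdiag : ∀ i : ι, B (Δ i) (Δ i) = 1)
    (H1 : ∀ γ ∈ Rt, Pos Δ γ ∨ Pos Δ (-γ)) (H2 : ∀ γ ∈ Rt, B γ γ = 1) (i : ι)
    {δ : V} (hδ : δ ∈ Rt) (hδ' : rf B (Δ i) δ ∈ Rt) (hp : Pos Δ δ) (hne : δ ≠ Δ i) :
    Pos Δ (rf B (Δ i) δ) := by
  classical
  rcases H1 _ hδ' with h | h
  · exact h
  exfalso
  have hz : ∀ j, j ≠ i → Δ.repr δ j = 0 := by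
    intro j hj
    have h1 := h j
    have h2 := hp j
    rw [rf_apply] at h1
    simp [Finsupp.single_apply, hj.symm] at h1
    linarith
  have hd : δ = (Δ.repr δ i) • Δ i := by
    conv_lhs => rw [← Δ.sum_repr δ]
    rw [Finset.sum_eq_single i]
    · intro j _ hj; rw [hz j hj, zero_smul]
    · simp
  have h2 := H2 _ hδ
  have h3 := hp i
  set c := Δ.repr δ i
  rw [hd] at h2
  simp [hdiag] at h2
  have hc : c = 1 := by nlinarith
  rw [hc, one_smul] at hd
  exact hne hd

lemma no_pos_rec (u : ℕ → ℝ) (c : ℝ) (hc : c < 1) (hu : ∀ k, 0 < u k)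
    (hrec : ∀ k, u (k + 2) = 2 * c * u (k + 1) - u k) : False := by
  have hd : ∀ k, u (k + 2) - u (k + 1) = (u (k + 1) - u k) - (2 - 2 * c) * u (k + 1) := by
    intro k; rw [hrec]; ring
  have hanti : Antitone (fun k => u (k + 1) - u k) := by
    apply antitone_nat_of_succ_le
    intro k
    have := hd k
    have := hu (k + 1)
    show u (k + 2) - u (k + 1) ≤ _
    nlinarith
  have hnn : ∀ k, 0 ≤ u (k + 1) - u k := by
    intro k
    by_contra hneg
    push Not at hneg
    have hlin : ∀ n : ℕ, u (k + n) ≤ u k + n * (u (k + 1) - u k) := by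
      intro n
      induction n with
      | zero => simp
      | succ n ih =>
        have h : u (k + n + 1) - u (k + n) ≤ u (k + 1) - u k := hanti (Nat.le_add_right k n)
        push_cast
        rw [← add_assoc]
        linarith
    obtain ⟨n, hn⟩ := exists_nat_gt (u k / (-(u (k + 1) - u k)))
    rw [div_lt_iff₀ (by linarith)] at hn
    have := hlin n
    have := hu (k + n)
    linarith
  have hmono : Monotone u := monotone_nat_of_le_succ (fun k => by linarith [hnn k])
  have hlin : ∀ n : ℕ, u (n + 1) - u n ≤ u 1 - u 0 - n * ((2 - 2 * c) * u 0) := by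
    intro n
    induction n with
    | zero => simp
    | succ n ih =>
      have h1 := hd n
      have h2 : u 0 ≤ u (n + 1) := hmono (Nat.zero_le _)
      have h3 : (2 - 2 * c) * u 0 ≤ (2 - 2 * c) * u (n + 1) :=
        mul_le_mul_of_nonneg_left h2 (by linarith)
      push_cast
      show u (n + 2) - u (n + 1) ≤ _
      linarith
  have hpos : 0 < (2 - 2 * c) * u 0 := mul_pos (by linarith) (hu 0)
  obtain ⟨n, hn⟩ := exists_nat_gt ((u 1 - u 0) / ((2 - 2 * c) * u 0))
  rw [div_lt_iff₀ hpos] at hn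
  have := hlin n
  have := hnn n
  linarith

/-- sum of coordinates as a linear form -/
def sumc : V →ₗ[ℝ] ℝ := ∑ i, Δ.coord i

lemma sumc_apply (v : V) : sumc Δ v = ∑ i, Δ.repr v i := by
  simp [sumc]

lemma sumc_simple (i : ι) : sumc Δ (Δ i) = 1 := by
  classical
  rw [sumc_apply]; simp [Finsupp.single_apply]

lemma sumc_pos {v : V} (hv : Pos Δ v) (h0 : v ≠ 0) : 0 < sumc Δ v := by
  rw [sumc_apply]
  apply lt_of_le_of_ne (Finset.sum_nonneg fun i _ => hv i)
  intro h
  apply h0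
  have := (Finset.sum_eq_zero_iff_of_nonneg (fun i _ => hv i)).1 h.symm
  apply Δ.ext_elem
  intro i
  simpa using this i (Finset.mem_univ i)

lemma pos_map {T : Module.End ℝ V} (hT : ∀ i, Pos Δ (T (Δ i))) {v : V} (hv : Pos Δ v) :
    Pos Δ (T v) := by
  intro j
  rw [← Δ.sum_repr v]
  simp only [map_sum, map_smul, Finsupp.coe_finsetSum, Finset.sum_apply, Finsupp.smul_apply,
    smul_eq_mul]
  exact Finset.sum_nonneg fun i _ => mul_nonneg (hv i) (hT i j)

/-- The averaged functional. -/
lemma exists_functional {Rt : Set V} (hsymm : ∀ u v : V, B u v = B v u)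
    (H1 : ∀ γ ∈ Rt, Pos Δ γ ∨ Pos Δ (-γ)) (H2 : ∀ γ ∈ Rt, B γ γ = 1)
    (H3 : ∀ i, Δ i ∈ Rt) (H5 : ∀ γ ∈ Rt, Good Δ Rt (rf B γ)) (i : ι) {b : V} (hb : b ∈ Rt)
    (hab : |B (Δ i) b| < 1) :
    ∃ y : V →ₗ[ℝ] ℝ, y (Δ i) = 0 ∧ y b = 0 ∧ {γ | γ ∈ Rt ∧ Pos Δ γ ∧ y γ ≤ 0}.Finite := by
  have hne0 : ∀ γ ∈ Rt, γ ≠ 0 := by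
    rintro γ h rfl
    have := H2 _ h
    simp at this
  set c := B (Δ i) b with hc
  have hc2 : c ^ 2 < 1 := (sq_lt_one_iff_abs_lt_one c).2 hab
  set s := Real.sqrt (1 - c ^ 2) with hsdef
  have hs2 : s ^ 2 = 1 - c ^ 2 := Real.sq_sqrt (by linarith)
  have hs0 : s ≠ 0 := by
    intro h; rw [h] at hs2; simp at hs2; linarith
  obtain ⟨φ, ψ, hφa, hψ1, ⟨ub, hub⟩, hφψ, hpow⟩ :=
    rot B hsymm (Δ i) b (H2 _ (H3 i)) (H2 _ hb) c s hc.symm (by linarith) hs0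
  set z : ℂ := ((c : ℂ) - s * Complex.I) ^ 2 with hz
  set r := rf B (Δ i) * rf B b with hr
  have hgr : Good Δ Rt r := (H5 _ (H3 i)).mul Δ (H5 _ hb)
  have hzn : ‖z‖ = 1 := by
    have : Complex.normSq ((c : ℂ) - s * Complex.I) = 1 := by
      simp [Complex.normSq_apply]; nlinarith
    rw [hz, norm_pow, ← Complex.normSq_eq_norm_sq, this]
  have hz1 : z ≠ 1 := by
    intro h
    have h1 := congrArg Complex.re h
    simp [hz, pow_two] at h1
    have : s ^ 2 = 0 := by nlinarith
    exact hs0 (by simpa using this)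
  have hψc : Continuous ψ := ψ.continuous_of_finiteDimensional
  have hxc : Continuous (fun u : ℂ => sumc Δ (ψ u)) :=
    (sumc Δ ∘ₗ ψ).continuous_of_finiteDimensional
  -- a power close to one
  obtain ⟨n, hn1, hn⟩ : ∃ n : ℕ, 1 ≤ n ∧ ∀ j, -1 < sumc Δ (ψ ((z ^ n - 1) * φ (Δ j))) := by
    obtain ⟨q, hq⟩ : ∃ q : Circle, (q : ℂ) = z :=
      ⟨⟨z, by simpa [Submonoid.unitSphere] using hzn⟩, rfl⟩
    have hcl := mapClusterPt_one_atTop_pow q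
    have hev : ∀ᶠ ζ : Circle in 𝓝 1, ∀ j, -1 < sumc Δ (ψ (((ζ : ℂ) - 1) * φ (Δ j))) := by
      rw [Filter.eventually_all]
      intro j
      have hcont : Continuous (fun ζ : Circle => sumc Δ (ψ (((ζ : ℂ) - 1) * φ (Δ j)))) := by
        apply hxc.comp
        fun_prop
      have h0 : (fun ζ : Circle => sumc Δ (ψ (((ζ : ℂ) - 1) * φ (Δ j)))) 1 = 0 := by simp
      exact hcont.continuousAt.eventually (by rw [h0]; exact lt_mem_nhds (by norm_num))
    have hfr := hcl.frequently hev
    obtain ⟨n, hn, hn'⟩ := (hfr.and_eventually (eventually_ge_atTop 1)).exists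
    exact ⟨n, hn', by simpa [hq] using hn⟩
  have hrn : ∀ j, Pos Δ ((r ^ n) (Δ j)) := by
    intro j
    have hmem := (hgr.pow Δ n).2.1 _ (H3 j)
    rcases H1 _ hmem with h | h
    · exact h
    · exfalso
      have h1 := sumc_pos Δ h (neg_ne_zero.2 (hne0 _ hmem))
      have h2 := hn j
      rw [hpow, map_neg, map_add, sumc_simple] at h1
      linarith
  have hzn1 : z ^ n = 1 := by
    by_contra hzne
    have hposk : ∀ k, Pos Δ (((r ^ n) ^ k) (Δ i)) := by
      intro k
      induction k with
      | zero => simpa using pos_simple Δ i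
      | succ k ih =>
        rw [pow_succ', Module.End.mul_apply]
        exact pos_map Δ hrn ih
    set ζ := z ^ n with hζ
    have hζn : ‖ζ‖ = 1 := by rw [hζ, norm_pow, hzn, one_pow]
    have hns : ζ.re * ζ.re + ζ.im * ζ.im = 1 := by
      rw [← Complex.normSq_apply, Complex.normSq_eq_norm_sq, hζn, one_pow]
    have hre : ζ.re < 1 := by
      by_contra hcon
      push Not at hcon
      apply hzne
      apply Complex.ext
      · simp; nlinarith [mul_self_nonneg ζ.im]
      · simp
        have : ζ.im * ζ.im = 0 := by nlinarith [mul_self_nonneg ζ.im]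
        simpa using this
    have hform : ∀ k, ((r ^ n) ^ k) (Δ i) = ψ (ζ ^ k) := by
      intro k
      have h1 : z ^ (n * k) = ζ ^ k := pow_mul z n k
      rw [← pow_mul, hpow, hφa, mul_one, map_sub, hψ1, h1]
      abel
    apply no_pos_rec (fun k => sumc Δ (ψ (ζ ^ k))) ζ.re hre
    · intro k
      rw [← hform]
      exact sumc_pos Δ (hposk k) (hne0 _ (((hgr.pow Δ n).pow Δ k).2.1 _ (H3 i)))
    · intro k
      have hq : ζ ^ (k + 2) = (2 * ζ.re) • ζ ^ (k + 1) - ζ ^ k := by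
        have h2 : ζ ^ 2 = ((2 * ζ.re : ℝ) : ℂ) * ζ - 1 := by
          apply Complex.ext
          · simp [pow_two]; linarith
          · simp [pow_two]; ring
        rw [Complex.real_smul, pow_add, h2]
        ring
      simp only [hq, map_sub, map_smul, smul_eq_mul]
  -- the functional
  have hgeom : ∑ k ∈ Finset.range n, z ^ k = 0 := by
    have := mul_neg_geom_sum z n
    rw [hzn1, sub_self] at this
    exact (mul_eq_zero.1 this).resolve_left (sub_ne_zero.2 hz1.symm)
  let y : V →ₗ[ℝ] ℝ := ∑ k ∈ Finset.range n, (sumc Δ) ∘ₗ (r ^ k)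
  have hy : ∀ v, y v = ∑ k ∈ Finset.range n, sumc Δ ((r ^ k) v) := by
    intro v; simp [y]
  have hyψ : ∀ u, y (ψ u) = 0 := by
    intro u
    rw [hy]
    have : ∀ k, (r ^ k) (ψ u) = ψ (z ^ k * u) := by
      intro k
      rw [hpow, hφψ, ← map_add]
      congr 1; ring
    simp only [this]
    rw [← map_sum, ← map_sum, ← Finset.sum_mul, hgeom]
    simp
  refine ⟨y, by rw [← hψ1]; exact hyψ 1, by rw [hub]; exact hyψ ub, ?_⟩
  refine (Set.Finite.biUnion (Finset.range n).finite_toSet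
    (fun k _ => (hgr.pow Δ k).2.2)).subset ?_
  rintro γ ⟨h1, h2, h3⟩
  by_contra hcon
  simp only [Set.mem_iUnion, not_exists] at hcon
  have hp : ∀ k ∈ Finset.range n, 0 < sumc Δ ((r ^ k) γ) := by
    intro k hk
    have hk' := hcon k hk
    have : Pos Δ ((r ^ k) γ) := by
      by_contra hh
      exact hk' ⟨h1, h2, hh⟩
    exact sumc_pos Δ this (hne0 _ ((hgr.pow Δ k).2.1 _ h1))
  have := Finset.sum_pos hp ⟨0, Finset.mem_range.2 (by omega)⟩
  rw [hy] at h3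
  linarith

/-- the finite set of values -/
def vals (Rt : Set V) : Set ℝ :=
  ⋃ I ∈ {I : Set ι | {γ | γ ∈ Rt ∧ ∀ i, i ∉ I → Δ.repr γ i = 0}.Finite},
    (fun p : V × V => B p.1 p.2) ''
      ({γ | γ ∈ Rt ∧ ∀ i, i ∉ I → Δ.repr γ i = 0} ×ˢ {γ | γ ∈ Rt ∧ ∀ i, i ∉ I → Δ.repr γ i = 0})

lemma vals_finite (Rt : Set V) : (vals B Δ Rt).Finite := by
  apply Set.Finite.biUnion (Set.toFinite _)
  intro I hI
  exact (Set.Finite.prod hI hI).image _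

lemma rf_isom (hsymm : ∀ u v : V, B u v = B v u) {a : V} (ha : B a a = 1) (u v : V) :
    B (rf B a u) (rf B a v) = B u v := by
  simp only [rf_apply, map_sub, map_smul, LinearMap.sub_apply, LinearMap.smul_apply, smul_eq_mul,
    ha, hsymm u a]
  ring

lemma rf_rf {a : V} (ha : B a a = 1) (v : V) : rf B a (rf B a v) = v := by
  simp only [rf_apply, map_sub, map_smul, smul_eq_mul, ha]
  module

lemma descent {Rt : Set V} (hsymm : ∀ u v : V, B u v = B v u)
    (H1 : ∀ γ ∈ Rt, Pos Δ γ ∨ Pos Δ (-γ)) (H2 : ∀ γ ∈ Rt, B γ γ = 1)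
    (H3 : ∀ i, Δ i ∈ Rt) (H5 : ∀ γ ∈ Rt, Good Δ Rt (rf B γ)) (n : ℕ) :
    ∀ (y : V →ₗ[ℝ] ℝ) (a b : V), a ∈ Rt → b ∈ Rt → y a = 0 → y b = 0 →
      {γ | γ ∈ Rt ∧ y γ = 0}.Finite → {γ | γ ∈ Rt ∧ Pos Δ γ ∧ y γ < 0}.Finite →
      {γ | γ ∈ Rt ∧ Pos Δ γ ∧ y γ < 0}.ncard = n → B a b ∈ vals B Δ Rt := by
  induction n using Nat.strong_induction_on with
  | _ n ih =>
  intro y a b ha hb hya hyb hz hneg hn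
  by_cases hall : ∀ i, 0 ≤ y (Δ i)
  · have hyv : ∀ v, y v = ∑ i, Δ.repr v i * y (Δ i) := by
      intro v
      conv_lhs => rw [← Δ.sum_repr v]
      simp only [map_sum, map_smul, smul_eq_mul]
    have hsupp : ∀ γ, Pos Δ γ → y γ = 0 → ∀ i, y (Δ i) ≠ 0 → Δ.repr γ i = 0 := by
      intro γ hγ h0 i hi
      rw [hyv] at h0
      have := (Finset.sum_eq_zero_iff_of_nonneg
        (fun i _ => mul_nonneg (hγ i) (hall i))).1 h0 i (Finset.mem_univ i)
      exact (mul_eq_zero.1 this).resolve_right hi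
    have hset : {γ | γ ∈ Rt ∧ ∀ i, i ∉ {i | y (Δ i) = 0} → Δ.repr γ i = 0}
        = {γ | γ ∈ Rt ∧ y γ = 0} := by
      ext γ
      simp only [Set.mem_setOf_eq]
      refine and_congr_right fun hγ => ⟨fun h => ?_, fun h i hi => ?_⟩
      · rw [hyv]
        apply Finset.sum_eq_zero
        intro i _
        by_cases hi : y (Δ i) = 0
        · rw [hi, mul_zero]
        · rw [h i hi, zero_mul]
      · rcases H1 _ hγ with hp | hp
        · exact hsupp γ hp h i hi
        · have := hsupp (-γ) hp (by simp [h]) i hi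
          simpa using this
    apply Set.mem_biUnion (x := {i | y (Δ i) = 0})
    · show Set.Finite _
      rw [hset]; exact hz
    · rw [hset]
      exact ⟨(a, b), ⟨⟨ha, hya⟩, ⟨hb, hyb⟩⟩, rfl⟩
  · push Not at hall
    obtain ⟨i, hi⟩ := hall
    have hii := H2 _ (H3 i)
    have hG := H5 _ (H3 i)
    set S := rf B (Δ i) with hS
    have hSS : ∀ v, S (S v) = v := rf_rf B hii
    have hSi : S (Δ i) = -Δ i := by rw [hS, rf_apply, hii]; module
    rw [← rf_isom B hsymm hii a b]
    have hsub : {γ | γ ∈ Rt ∧ Pos Δ γ ∧ (y ∘ₗ S) γ < 0} ⊆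
        S ⁻¹' ({γ | γ ∈ Rt ∧ Pos Δ γ ∧ y γ < 0} \ {Δ i}) := by
      rintro γ ⟨h1, h2, h3⟩
      have hne : γ ≠ Δ i := by
        rintro rfl
        simp [hSi] at h3
        linarith
      refine ⟨⟨hG.2.1 _ h1, ?_, h3⟩, ?_⟩
      · exact rf_simple_pos B Δ (fun i => H2 _ (H3 i)) H1 H2 i h1 (hG.2.1 _ h1) h2 hne
      · intro h
        have h' : S γ = Δ i := h
        have h4 : γ = -Δ i := by rw [← hSS γ, h', hSi]
        have h5 := h2 i
        rw [h4] at h5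
        simp at h5
        linarith
    have hfin := (hneg.diff (t := {Δ i})).preimage (f := S) hG.1.injOn
    refine ih _ ?_ (y ∘ₗ S) (S a) (S b) (hG.2.1 _ ha) (hG.2.1 _ hb) (by simp [hSS, hya])
      (by simp [hSS, hyb]) ?_ (hfin.subset hsub) rfl
    · refine lt_of_le_of_lt (Set.ncard_le_ncard hsub hfin) ?_
      refine lt_of_le_of_lt (b := ({γ | γ ∈ Rt ∧ Pos Δ γ ∧ y γ < 0} \ {Δ i}).ncard) ?_ ?_
      · rw [← Set.ncard_image_of_injective _ hG.1]
        exact Set.ncard_le_ncard (Set.image_preimage_subset _ _) hneg.diff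
      · rw [← hn]
        exact Set.ncard_diff_singleton_lt_of_mem ⟨H3 i, pos_simple Δ i, hi⟩ hneg
    · refine (hz.preimage (f := S) hG.1.injOn).subset ?_
      rintro γ ⟨h1, h2⟩
      exact ⟨hG.2.1 _ h1, h2⟩

lemma finite_abs {Rt : Set V} (hsymm : ∀ u v : V, B u v = B v u)
    (H1 : ∀ γ ∈ Rt, Pos Δ γ ∨ Pos Δ (-γ)) (H2 : ∀ γ ∈ Rt, B γ γ = 1)
    (H3 : ∀ i, Δ i ∈ Rt) (H5 : ∀ γ ∈ Rt, Good Δ Rt (rf B γ)) :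
    {t : ℝ | |t| < 1 ∧ ∃ i, ∃ ρ ∈ Rt, B (Δ i) ρ = t}.Finite := by
  refine (vals_finite B Δ Rt).subset ?_
  rintro t ⟨ht, i, ρ, hρ, rfl⟩
  obtain ⟨y, hy1, hy2, hfin⟩ := exists_functional B Δ hsymm H1 H2 H3 H5 i hρ ht
  refine descent B Δ hsymm H1 H2 H3 H5 _ y _ _ (H3 i) hρ hy1 hy2 ?_ ?_ rfl
  · refine (hfin.union (hfin.preimage (f := fun v => -v) neg_injective.injOn)).subset ?_
    rintro γ ⟨h1, h2⟩
    rcases H1 _ h1 with h | h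
    · exact Or.inl ⟨h1, h, h2.le⟩
    · right
      refine ⟨?_, h, by simp [h2]⟩
      have := (H5 _ h1).2.1 _ h1
      rw [rf_apply, H2 _ h1] at this
      convert this using 1
      module
  · exact hfin.subset (fun γ h => ⟨h.1, h.2.1, h.2.2.le⟩)

end abs

/-- choice of the Coxeter exponent -/
def mexp (t : ℝ) : ℕ :=
  open Classical in
  if h : ∃ k : ℕ, 2 ≤ k ∧ t = -Real.cos (Real.pi / (k : ℝ)) then h.choose else 0

/-- The Coxeter matrix. -/
def cmat (B : LinearMap.BilinForm ℝ V) (Δ : Module.Basis ι ℝ V)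
    (hsymm : ∀ u v : V, B u v = B v u) : CoxeterMatrix ι where
  M := fun i j => open Classical in if i = j then 1 else mexp (B (Δ i) (Δ j))
  isSymm := by
    classical
    funext i j
    show (if j = i then 1 else mexp (B (Δ j) (Δ i))) = (if i = j then 1 else mexp (B (Δ i) (Δ j)))
    rw [hsymm (Δ j) (Δ i)]
    simp only [eq_comm]
  diagonal := by intro i; simp
  off_diagonal := by
    intro i j hij
    simp only [hij, if_false]
    unfold mexp
    split_ifs with h
    · have := h.choose_spec.1; omega
    · norm_num

lemma cmat_spec (B : LinearMap.BilinForm ℝ V) (Δ : Module.Basis ι ℝ V)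
    (hsymm : ∀ u v : V, B u v = B v u)
    (hoff : ∀ i j : ι, i ≠ j → B (Δ i) (Δ j) ≤ -1 ∨
      ∃ k : ℕ, 2 ≤ k ∧ B (Δ i) (Δ j) = -Real.cos (Real.pi / (k : ℝ))) (i j : ι) (hij : i ≠ j) :
    (cmat B Δ hsymm i j = 0 ∧ B (Δ i) (Δ j) ≤ -1) ∨
      (2 ≤ cmat B Δ hsymm i j ∧
        B (Δ i) (Δ j) = -Real.cos (Real.pi / (cmat B Δ hsymm i j : ℕ))) := by
  have e : cmat B Δ hsymm i j = mexp (B (Δ i) (Δ j)) := by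
    show (open Classical in if i = j then 1 else mexp (B (Δ i) (Δ j))) = _
    simp [hij]
  rw [e]
  unfold mexp
  split_ifs with h
  · right; exact h.choose_spec
  · left
    exact ⟨rfl, (hoff i j hij).resolve_right h⟩

lemma braid (B : LinearMap.BilinForm ℝ V) (hsymm : ∀ u v : V, B u v = B v u) (a b : V)
    (haa : B a a = 1) (hbb : B b b = 1) (m : ℕ) (hm : 2 ≤ m)
    (hab : B a b = -Real.cos (Real.pi / m)) : (rf B a * rf B b) ^ m = 1 := by
  have hm' : (2 : ℝ) ≤ m := by exact_mod_cast hm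
  have hs : 0 < Real.sin (Real.pi / m) := by
    apply Real.sin_pos_of_pos_of_lt_pi
    · have := Real.pi_pos; positivity
    · apply div_lt_self Real.pi_pos; linarith
  obtain ⟨φ, ψ, -, -, -, -, h⟩ := rot B hsymm a b haa hbb _ (Real.sin (Real.pi / m)) hab
    (by rw [neg_sq, Real.sin_sq_add_cos_sq]) hs.ne'
  ext v
  rw [h]
  have hz : ((((-Real.cos (Real.pi / m) : ℝ) : ℂ) - (Real.sin (Real.pi / m) : ℝ) * Complex.I) ^ 2) ^ m
      = 1 := by
    have e : (((-Real.cos (Real.pi / m) : ℝ) : ℂ) - (Real.sin (Real.pi / m) : ℝ) * Complex.I)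
        = - Complex.exp ((Real.pi / m : ℝ) * Complex.I) := by
      rw [Complex.exp_mul_I]; push_cast; ring
    rw [e, neg_sq, ← pow_mul, ← Complex.exp_nat_mul]
    rw [← Complex.exp_two_pi_mul_I]
    congr 1
    have : (m : ℂ) ≠ 0 := by exact_mod_cast (by omega : m ≠ 0)
    push_cast
    field_simp
  rw [hz]
  simp

/-- The set `{B(α,ρ) : α ∈ Δ, ρ ∈ Φ⁺, |B(α,ρ)| < 1}` is finite. -/
theorem statement3 (B : LinearMap.BilinForm ℝ V) (Δ : Module.Basis ι ℝ V)
    (hsymm : ∀ u v : V, B u v = B v u)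
    (hdiag : ∀ i : ι, B (Δ i) (Δ i) = 1)
    (hoff : ∀ i j : ι, i ≠ j → B (Δ i) (Δ j) ≤ -1 ∨
      ∃ k : ℕ, 2 ≤ k ∧ B (Δ i) (Δ j) = -Real.cos (Real.pi / (k : ℝ))) :
    Set.Finite { t : ℝ | |t| < 1 ∧ ∃ i : ι, ∃ ρ ∈ posPhi B Δ, B (Δ i) ρ = t } := by
  classical
  have hM := cmat_spec B Δ hsymm hoff
  set M := cmat B Δ hsymm with hMdef
  let cs := M.toCoxeterSystem
  have hlift : M.IsLiftable (fun i => rf B (Δ i)) := by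
    intro i j
    by_cases hij : i = j
    · subst hij
      rw [M.diagonal, pow_one]
      ext v
      exact rf_rf B (hdiag i) v
    · rcases hM i j hij with ⟨h, -⟩ | ⟨h1, h2⟩
      · rw [h, pow_zero]
      · exact braid B hsymm _ _ (hdiag i) (hdiag j) _ h1 h2
  let R : M.Group →* Module.End ℝ V := cs.lift ⟨_, hlift⟩
  have hR : ∀ i, R (cs.simple i) = rf B (Δ i) := fun i => cs.lift_apply_simple hlift i
  have hiso : ∀ w : M.Group, ∀ u v, B (R w u) (R w v) = B u v := by
    intro w
    induction w using cs.simple_induction_left with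
    | one => simp
    | mul_simple_left w i ih =>
      intro u v
      rw [map_mul, hR, Module.End.mul_apply, Module.End.mul_apply, rf_isom B hsymm (hdiag i), ih]
  let Rt : Set V := {γ | ∃ (w : M.Group) (i : ι), R w (Δ i) = γ}
  have H1 : ∀ γ ∈ Rt, Pos Δ γ ∨ Pos Δ (-γ) := by
    rintro γ ⟨w, i, rfl⟩
    exact pos_or_neg cs R hsymm hdiag hR hM w i
  have H2 : ∀ γ ∈ Rt, B γ γ = 1 := by
    rintro γ ⟨w, i, rfl⟩
    rw [hiso, hdiag]
  have H3 : ∀ i, Δ i ∈ Rt := fun i => ⟨1, i, by simp⟩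
  have hmem : ∀ w : M.Group, ∀ γ ∈ Rt, R w γ ∈ Rt := by
    rintro w γ ⟨w', i, rfl⟩
    exact ⟨w * w', i, by simp⟩
  have hgs : ∀ i, Good Δ Rt (rf B (Δ i)) := by
    intro i
    refine ⟨?_, ?_, ?_⟩
    · intro u v h
      rw [← rf_rf B (hdiag i) u, h, rf_rf B (hdiag i) v]
    · intro γ hγ
      rw [← hR]
      exact hmem _ _ hγ
    · refine (Set.finite_singleton (Δ i)).subset ?_
      rintro δ ⟨h1, h2, h3⟩
      by_contra hne
      exact h3 (rf_simple_pos B Δ hdiag H1 H2 i h1 (by rw [← hR]; exact hmem _ _ h1) h2 hne)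
  have hgood : ∀ w : M.Group, Good Δ Rt (R w) := by
    intro w
    induction w using cs.simple_induction_left with
    | one => rw [map_one]; exact Good.one Δ Rt
    | mul_simple_left w i ih =>
      rw [map_mul, hR]
      exact (hgs i).mul Δ ih
  have H5 : ∀ γ ∈ Rt, Good Δ Rt (rf B γ) := by
    rintro γ ⟨w, i, rfl⟩
    have : rf B (R w (Δ i)) = R (w * cs.simple i * w⁻¹) := by
      ext v
      have hv : v = R w (R w⁻¹ v) := by
        rw [← Module.End.mul_apply, ← map_mul]; simp
      rw [map_mul, map_mul, hR, Module.End.mul_apply, Module.End.mul_apply, rf_apply, rf_apply,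
        map_sub, map_smul, ← hv]
      conv_lhs => rw [hv, hiso, ← hv]
    rw [this]
    exact hgood _
  refine (finite_abs B Δ hsymm H1 H2 H3 H5).subset ?_
  rintro t ⟨ht, i, ρ, ⟨⟨e, he, j, rfl⟩, -⟩, rfl⟩
  refine ⟨ht, i, _, ?_, rfl⟩
  have hcox : ∃ w : M.Group, ∀ v, e v = R w v := by
    unfold cox at he
    clear ht
    induction he using Subgroup.closure_induction with
    | mem x hx =>
      obtain ⟨i, hi⟩ := hx
      refine ⟨cs.simple i, fun v => ?_⟩
      rw [hi, hR, rf_apply, hdiag, div_one]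
    | one => exact ⟨1, fun v => by simp⟩
    | mul x y _ _ hx hy =>
      obtain ⟨w1, h1⟩ := hx
      obtain ⟨w2, h2⟩ := hy
      exact ⟨w1 * w2, fun v => by simp [h1, h2]⟩
    | inv x _ hx =>
      obtain ⟨w, h⟩ := hx
      refine ⟨w⁻¹, fun v => ?_⟩
      have h1 : x (x⁻¹ v) = v := by
        rw [← LinearEquiv.mul_apply, mul_inv_cancel]; rfl
      rw [h] at h1
      conv_rhs => rw [← h1]
      rw [← Module.End.mul_apply, ← map_mul]; simp
  obtain ⟨w, hw⟩ := hcox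
  exact ⟨w, j, (hw _).symm⟩
end
end

section
/- Let ‖·‖ be the Euclidean norm on V for which Δ is an orthonormal basis. Then there exists λ > 0 such that for every positive root ρ ∈ Φ⁺ one has ‖ρ‖² ≥ 1 + λ·(dp(ρ) − 1). -/
open Filter Topology

noncomputable section

variable {ι V : Type*} [Fintype ι] [NormedAddCommGroup V] [NormedSpace ℝ V]

/-- `ρ` can be written as `s_{α₁} s_{α₂} ⋯ s_{α_k} (α_{k+1})` with the `αⱼ` simple roots. -/
def hasExpr (B : LinearMap.BilinForm ℝ V) (Δ : Module.Basis ι ℝ V) (ρ : V) (k : ℕ) : Prop :=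
  ∃ l : List (V ≃ₗ[ℝ] V), l.length = k ∧ (∀ e ∈ l, e ∈ simpleReflections B Δ) ∧
    ∃ i : ι, l.prod (Δ i) = ρ

/-- The depth of a positive root:
`dp(ρ) = 1 + min { k | ρ = s_{α₁} s_{α₂} ⋯ s_{α_k} (α_{k+1}) }`. -/
def depth (B : LinearMap.BilinForm ℝ V) (Δ : Module.Basis ι ℝ V) (ρ : V) : ℕ :=
  1 + sInf { k : ℕ | hasExpr B Δ ρ k }

section Helpers

set_option linter.unusedSectionVars false

structure Hyp (B : LinearMap.BilinForm ℝ V) (Δ : Module.Basis ι ℝ V) : Prop where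
  symm : ∀ u v : V, B u v = B v u
  diag : ∀ i : ι, B (Δ i) (Δ i) = 1
  off : ∀ i j : ι, i ≠ j → B (Δ i) (Δ j) ≤ -1 ∨
      ∃ k : ℕ, 2 ≤ k ∧ B (Δ i) (Δ j) = -Real.cos (Real.pi / (k : ℝ))

variable {B : LinearMap.BilinForm ℝ V} {Δ : Module.Basis ι ℝ V}

def Rf (B : LinearMap.BilinForm ℝ V) (v : V) (hv : B v v = 1) : V ≃ₗ[ℝ] V :=
  Module.reflection (x := v) (f := (2:ℝ) • B v) (by simp [hv])

lemma Rf_apply (v : V) (hv : B v v = 1) (u : V) : Rf B v hv u = u - (2 * B v u) • v := by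
  simp [Rf, Module.reflection_apply]

def Sr (H : Hyp B Δ) (i : ι) : V ≃ₗ[ℝ] V := Rf B (Δ i) (H.diag i)

lemma Sr_apply (H : Hyp B Δ) (i : ι) (u : V) : Sr H i u = u - (2 * B (Δ i) u) • Δ i :=
  Rf_apply _ _ _

lemma Sr_mul_self (H : Hyp B Δ) (i : ι) : Sr H i * Sr H i = 1 := by
  ext u
  exact Module.involutive_reflection (x := Δ i) (f := (2:ℝ) • B (Δ i)) (by simp [H.diag]) u

lemma Sr_Sr (H : Hyp B Δ) (i : ι) (u : V) : Sr H i (Sr H i u) = u :=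
  DFunLike.congr_fun (Sr_mul_self H i) u

lemma Sr_self (H : Hyp B Δ) (i : ι) : Sr H i (Δ i) = - Δ i := by
  rw [Sr_apply, H.diag]; module

lemma mem_simple (H : Hyp B Δ) (e : V ≃ₗ[ℝ] V) :
    e ∈ simpleReflections B Δ ↔ ∃ i, e = Sr H i := by
  constructor
  · rintro ⟨i, h⟩
    refine ⟨i, ?_⟩
    ext u
    rw [h, Sr_apply, H.diag, div_one]
  · rintro ⟨i, rfl⟩
    refine ⟨i, fun u => ?_⟩
    rw [Sr_apply, H.diag, div_one]

def Pw (H : Hyp B Δ) (l : List ι) : V ≃ₗ[ℝ] V := (l.map (Sr H)).prod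

lemma Pw_nil (H : Hyp B Δ) : Pw H [] = 1 := rfl
lemma Pw_cons (H : Hyp B Δ) (i : ι) (l : List ι) : Pw H (i :: l) = Sr H i * Pw H l := by
  simp [Pw]
lemma Pw_append (H : Hyp B Δ) (l l' : List ι) : Pw H (l ++ l') = Pw H l * Pw H l' := by
  simp [Pw]

lemma Pw_reverse (H : Hyp B Δ) (l : List ι) : Pw H l.reverse * Pw H l = 1 := by
  induction l with
  | nil => simp [Pw]
  | cons i l ih =>
    rw [List.reverse_cons, Pw_append, Pw_cons, Pw_cons, Pw_nil, mul_one]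
    calc Pw H l.reverse * Sr H i * (Sr H i * Pw H l)
        = Pw H l.reverse * (Sr H i * Sr H i) * Pw H l := by group
      _ = 1 := by rw [Sr_mul_self, mul_one, ih]

lemma mem_cox (H : Hyp B Δ) (w : V ≃ₗ[ℝ] V) : w ∈ cox B Δ ↔ ∃ l, w = Pw H l := by
  constructor
  · intro hw
    induction hw using Subgroup.closure_induction with
    | mem x hx =>
      obtain ⟨i, rfl⟩ := (mem_simple H x).1 hx
      exact ⟨[i], by simp [Pw]⟩
    | one => exact ⟨[], rfl⟩
    | mul x y _ _ hx hy =>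
      obtain ⟨l, rfl⟩ := hx
      obtain ⟨l', rfl⟩ := hy
      exact ⟨l ++ l', (Pw_append H l l').symm⟩
    | inv x _ hx =>
      obtain ⟨l, rfl⟩ := hx
      exact ⟨l.reverse, inv_eq_of_mul_eq_one_left (Pw_reverse H l)⟩
  · rintro ⟨l, rfl⟩
    refine Subgroup.list_prod_mem _ ?_
    intro x hx
    obtain ⟨i, _, rfl⟩ := List.mem_map.1 hx
    exact Subgroup.subset_closure ((mem_simple H _).2 ⟨i, rfl⟩)

lemma Sr_mem (H : Hyp B Δ) (i : ι) : Sr H i ∈ cox B Δ :=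
  Subgroup.subset_closure ((mem_simple H _).2 ⟨i, rfl⟩)

lemma B_Rf (H : Hyp B Δ) (v : V) (hv : B v v = 1) (x y : V) :
    B (Rf B v hv x) (Rf B v hv y) = B x y := by
  simp only [Rf_apply, map_sub, map_smul, LinearMap.sub_apply, LinearMap.smul_apply, smul_eq_mul,
    hv, H.symm x v]
  ring

lemma B_cox (H : Hyp B Δ) {w : V ≃ₗ[ℝ] V} (hw : w ∈ cox B Δ) (x y : V) :
    B (w x) (w y) = B x y := by
  obtain ⟨l, rfl⟩ := (mem_cox H w).1 hw
  clear hw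
  induction l with
  | nil => rfl
  | cons i l ih =>
    rw [Pw_cons]
    exact (B_Rf H (Δ i) (H.diag i) _ _).trans ih

/-- conjugation -/
lemma conj_Sr (H : Hyp B Δ) {w : V ≃ₗ[ℝ] V} (hw : w ∈ cox B Δ) (i : ι) (u : V) :
    w (Sr H i u) = w u - (2 * B (w (Δ i)) (w u)) • w (Δ i) := by
  rw [B_cox H hw, Sr_apply, map_sub, map_smul]

lemma conj_simple (H : Hyp B Δ) {w : V ≃ₗ[ℝ] V} (hw : w ∈ cox B Δ) (i j : ι)
    (h : w (Δ i) = Δ j) : w * Sr H i = Sr H j * w := by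
  ext u
  change w (Sr H i u) = Sr H j (w u)
  rw [conj_Sr H hw, h, Sr_apply]

def PosV (Δ : Module.Basis ι ℝ V) (v : V) : Prop := ∀ i, 0 ≤ Δ.repr v i

def qs (c : ℝ) : ℕ → ℝ
  | 0 => 0
  | 1 => 1
  | (n+2) => 2 * c * qs c (n+1) - qs c n

lemma qs_ge (c : ℝ) (hc : 1 ≤ c) (n : ℕ) : 0 ≤ qs c n ∧ qs c n ≤ qs c (n+1) := by
  induction n with
  | zero => simp [qs]
  | succ n ih => refine ⟨ih.1.trans ih.2, ?_⟩; simp only [qs]; nlinarith [ih.1, ih.2]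

lemma qs_cos (t : ℝ) (n : ℕ) : qs (Real.cos t) n * Real.sin t = Real.sin (n * t) ∧
    qs (Real.cos t) (n+1) * Real.sin t = Real.sin ((n+1) * t) := by
  induction n with
  | zero => simp [qs]
  | succ n ih =>
    push_cast
    refine ⟨ih.2, ?_⟩
    simp only [qs]
    have h1 : ((n:ℝ)+1+1)*t = (n+1)*t + t := by ring
    have h2 : (n:ℝ)*t = (n+1)*t - t := by ring
    have h3 := ih.1
    rw [h2, Real.sin_sub] at h3
    rw [h1, Real.sin_add, sub_mul, h3, mul_assoc, ih.2]; ring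

/-- dihedral step -/
lemma dihedral (H : Hyp B Δ) (s t : ι) (hst : s ≠ t) (u : List ι)
    (hu : ∀ x ∈ u, x = s ∨ x = t)
    (hred : ∀ u' : List ι, (∀ x ∈ u', x = s ∨ x = t) → Pw H u' = Pw H u → u.length ≤ u'.length)
    (hs : ∀ u' : List ι, (∀ x ∈ u', x = s ∨ x = t) → Pw H u' = Pw H u * Sr H s →
      u.length ≤ u'.length) :
    ∃ X Y, ((X = s ∧ Y = t) ∨ (X = t ∧ Y = s)) ∧ (u = [] → X = s) ∧
      (∀ z u', u = z :: u' → z = X) ∧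
      Pw H u (Δ s) = qs (-B (Δ s) (Δ t)) (u.length + 1) • Δ X
        + qs (-B (Δ s) (Δ t)) u.length • Δ Y ∧
      0 ≤ qs (-B (Δ s) (Δ t)) (u.length + 1) ∧ 0 ≤ qs (-B (Δ s) (Δ t)) u.length ∧
      (∀ k : ℕ, 2 ≤ k → B (Δ s) (Δ t) = - Real.cos (Real.pi / k) → u.length < k) := by
  induction u with
  | nil =>
    refine ⟨s, t, Or.inl ⟨rfl, rfl⟩, fun _ => rfl, by simp, ?_, by simp [qs], by simp [qs], ?_⟩
    · simp [qs, Pw_nil]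
    · intro k hk _; simp; omega
  | cons x u ih =>
    have hx : x = s ∨ x = t := hu x (by simp)
    have hu' : ∀ z ∈ u, z = s ∨ z = t := fun z hz => hu z (by simp [hz])
    obtain ⟨X, Y, hXY, hnil, hcons, hval, hq1, hq0, hk⟩ := ih hu'
      (by
        intro u' h1 h2
        have := hred (x :: u') (by simpa using ⟨hx, h1⟩) (by rw [Pw_cons, Pw_cons, h2])
        simpa using this)
      (by
        intro u' h1 h2
        have := hs (x :: u') (by simpa using ⟨hx, h1⟩) (by rw [Pw_cons, Pw_cons, h2, mul_assoc])
        simpa using this)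
    have hxX : x ≠ X := by
      rintro rfl
      cases u with
      | nil =>
        have e := hnil rfl
        have := hs [] (by simp) (by rw [Pw_cons, Pw_nil, e, mul_one, Sr_mul_self])
        simp at this
      | cons z u' =>
        have e := hcons z u' rfl
        have := hred u' (fun y hy => hu' y (by simp [hy]))
          (by rw [Pw_cons, Pw_cons, e, ← mul_assoc, Sr_mul_self, one_mul])
        simp at this
    have hxY : x = Y := by
      rcases hXY with ⟨rfl, rfl⟩ | ⟨rfl, rfl⟩ <;> tauto
    subst hxY
    have hBXY : B (Δ x) (Δ X) = B (Δ s) (Δ t) := by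
      rcases hXY with ⟨rfl, rfl⟩ | ⟨rfl, rfl⟩
      · exact H.symm _ _
      · rfl
    have hklt : ∀ k : ℕ, 2 ≤ k → B (Δ s) (Δ t) = - Real.cos (Real.pi / k) →
        (x :: u).length < k := by
      intro k hk2 hB
      have h1 := hk k hk2 hB
      by_contra hcon
      have hlen : k = u.length + 1 := by simp at hcon; omega
      have hk0 : (0:ℝ) < k := by positivity
      have hsin : 0 < Real.sin (Real.pi / k) := by
        apply Real.sin_pos_of_pos_of_lt_pi (by positivity)
        rw [div_lt_iff₀ hk0]
        have : (2:ℝ) ≤ k := by exact_mod_cast hk2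
        nlinarith [Real.pi_pos]
      have hq := qs_cos (Real.pi / k) u.length
      have hkr : (k:ℝ) = u.length + 1 := by exact_mod_cast hlen
      have e1 : ((u.length:ℝ)+1) * (Real.pi / k) = Real.pi := by rw [← hkr]; field_simp
      have e2 : (u.length:ℝ) * (Real.pi / k) = Real.pi - Real.pi / k := by
        linarith
      rw [e1, e2, Real.sin_pi, Real.sin_pi_sub] at hq
      have q1 : qs (-B (Δ s) (Δ t)) (u.length+1) = 0 := by
        rw [hB, neg_neg]; simpa [hsin.ne'] using hq.2
      have q0 : qs (-B (Δ s) (Δ t)) u.length = 1 := by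
        rw [hB, neg_neg]; exact mul_right_cancel₀ hsin.ne' (hq.1.trans (one_mul _).symm)
      rw [q1, q0, zero_smul, zero_add, one_smul] at hval
      have hc := conj_simple H ((mem_cox H _).2 ⟨u, rfl⟩) s x hval
      have := hs u hu' (by rw [Pw_cons, mul_assoc, hc, ← mul_assoc, Sr_mul_self, one_mul])
      simp at this
    refine ⟨x, X, by tauto, by simp, by simp +contextual, ?_, ?_, ?_, hklt⟩
    · rw [Pw_cons]
      change Sr H x (Pw H u (Δ s)) = _
      rw [hval, Sr_apply]
      simp only [map_add, map_smul, smul_eq_mul, H.diag, hBXY, List.length_cons, qs]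
      module
    · rcases H.off s t hst with h | ⟨k, hk2, hB⟩
      · exact (qs_ge _ (by linarith) _).1
      · have h1 := hklt k hk2 hB
        have hk0 : (0:ℝ) < k := by positivity
        have hsin : 0 < Real.sin (Real.pi / k) := by
          apply Real.sin_pos_of_pos_of_lt_pi (by positivity)
          rw [div_lt_iff₀ hk0]
          have : (2:ℝ) ≤ k := by exact_mod_cast hk2
          nlinarith [Real.pi_pos]
        have hq := (qs_cos (Real.pi / k) (x :: u).length).2
        rw [hB, neg_neg]
        have h2 : (((x :: u).length:ℝ)+1) ≤ k := by exact_mod_cast h1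
        have h3 : 0 ≤ Real.sin ((((x :: u).length:ℝ)+1) * (Real.pi / k)) := by
          apply Real.sin_nonneg_of_nonneg_of_le_pi (by positivity)
          rw [← mul_div_assoc, div_le_iff₀ hk0]
          nlinarith [Real.pi_pos]
        rw [← hq] at h3
        exact nonneg_of_mul_nonneg_left h3 hsin
    · exact hq1

lemma PosV_comb {v w : V} (hv : PosV Δ v) (hw : PosV Δ w) {a b : ℝ} (ha : 0 ≤ a) (hb : 0 ≤ b) :
    PosV Δ (a • v + b • w) := by
  intro i
  simp only [map_add, map_smul, Finsupp.add_apply, Finsupp.smul_apply, smul_eq_mul]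
  have := hv i
  have := hw i
  positivity

lemma PosV_simple (i : ι) : PosV Δ (Δ i) := by
  classical
  intro j
  rw [Module.Basis.repr_self, Finsupp.single_apply]
  split_ifs <;> simp

lemma pos_of_reduced (H : Hyp B Δ) (n : ℕ) : ∀ (l : List ι) (s : ι), l.length = n →
    (∀ l', Pw H l' = Pw H l → n ≤ l'.length) →
    (∀ l', Pw H l' = Pw H l * Sr H s → n ≤ l'.length) → PosV Δ (Pw H l (Δ s)) := by
  induction n using Nat.strong_induction_on with
  | _ n ih =>
  intro l s hl hred hs
  rcases List.eq_nil_or_concat l with rfl | ⟨l0, t, rfl⟩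
  · exact PosV_simple s
  rw [List.concat_eq_append] at *
  have hst : s ≠ t := by
    rintro rfl
    have := hs l0 (by rw [Pw_append, Pw_cons, Pw_nil, mul_one, mul_assoc, Sr_mul_self, mul_one])
    simp at hl; omega
  set Q : ℕ → Prop := fun m => ∃ v u : List ι, v.length = m ∧ (∀ x ∈ u, x = s ∨ x = t) ∧
    Pw H v * Pw H u = Pw H (l0 ++ [t]) ∧ v.length + u.length ≤ n with hQ
  have hQ0 : Q l0.length := ⟨l0, [t], rfl, by simp, (Pw_append _ _ _).symm, by simpa using hl.le⟩
  classical
  have hex : ∃ m, Q m := ⟨_, hQ0⟩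
  obtain ⟨v, u, hvm, hu, hvu, hlen⟩ := Nat.find_spec hex
  have hmin : ∀ m, Q m → v.length ≤ m := fun m hm => hvm ▸ Nat.find_min' hex hm
  have hlt : v.length < n := by
    have := hmin _ hQ0
    simp at hl; omega
  have hvred : ∀ l', Pw H l' = Pw H v → v.length ≤ l'.length := by
    intro l' h
    by_contra hc
    have := hmin l'.length ⟨l', u, rfl, hu, by rw [h, hvu], by omega⟩
    omega
  have hvr : ∀ r, (r = s ∨ r = t) → ∀ l', Pw H l' = Pw H v * Sr H r → v.length ≤ l'.length := by
    intro r hr l' h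
    by_contra hc
    have := hmin l'.length ⟨l', r :: u, rfl, by simpa using ⟨hr, hu⟩, by
      rw [h, Pw_cons, mul_assoc, ← mul_assoc (Sr H r), Sr_mul_self, one_mul, hvu],
      by simp; omega⟩
    omega
  have hps := ih v.length hlt v s rfl hvred (hvr s (Or.inl rfl))
  have hpt := ih v.length hlt v t rfl hvred (hvr t (Or.inr rfl))
  obtain ⟨X, Y, hXY, -, -, hval, hq1, hq0, -⟩ := dihedral H s t hst u hu
    (by
      intro u' _ h
      have := hred (v ++ u') (by rw [Pw_append, h, hvu])
      simp at this; omega)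
    (by
      intro u' _ h
      have := hs (v ++ u') (by rw [Pw_append, h, ← hvu, mul_assoc])
      simp at this; omega)
  rw [← hvu]
  change PosV Δ (Pw H v (Pw H u (Δ s)))
  rw [hval, map_add, map_smul, map_smul]
  rcases hXY with ⟨rfl, rfl⟩ | ⟨rfl, rfl⟩
  · exact PosV_comb hps hpt hq1 hq0
  · exact PosV_comb hpt hps hq1 hq0

lemma exists_reduced (H : Hyp B Δ) (l : List ι) : ∃ l0, Pw H l0 = Pw H l ∧ l0.length ≤ l.length ∧
    ∀ l', Pw H l' = Pw H l0 → l0.length ≤ l'.length := by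
  classical
  have hex : ∃ m, ∃ l0, Pw H l0 = Pw H l ∧ l0.length = m := ⟨_, l, rfl, rfl⟩
  obtain ⟨l0, h1, h2⟩ := Nat.find_spec hex
  refine ⟨l0, h1, ?_, ?_⟩
  · rw [h2]; exact Nat.find_min' hex ⟨l, rfl, rfl⟩
  · intro l' h
    rw [h2]; exact Nat.find_min' hex ⟨l', h.trans h1, rfl⟩

lemma pos_or_neg_s4 (H : Hyp B Δ) {ρ : V} (hρ : ρ ∈ Phi B Δ) : PosV Δ ρ ∨ PosV Δ (-ρ) := by
  obtain ⟨w, hw, s, rfl⟩ := hρ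
  obtain ⟨l, rfl⟩ := (mem_cox H w).1 hw
  obtain ⟨l0, h1, -, h3⟩ := exists_reduced H l
  rw [← h1]
  by_cases hc : ∀ l', Pw H l' = Pw H l0 * Sr H s → l0.length ≤ l'.length
  · exact Or.inl (pos_of_reduced H _ l0 s rfl h3 hc)
  · push Not at hc
    obtain ⟨l', h4, h5⟩ := hc
    obtain ⟨l2, h6, h7, h8⟩ := exists_reduced H l'
    right
    have := pos_of_reduced H _ l2 s rfl h8 (by
      intro l3 h9
      have := h3 l3 (by rw [h9, h6, h4, mul_assoc, Sr_mul_self, mul_one])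
      omega)
    rw [h6, h4] at this
    change PosV Δ (Pw H l0 (Sr H s (Δ s))) at this
    rwa [Sr_self, map_neg] at this

lemma Phi_cox {w : V ≃ₗ[ℝ] V} (hw : w ∈ cox B Δ) {ρ : V} (hρ : ρ ∈ Phi B Δ) : w ρ ∈ Phi B Δ := by
  obtain ⟨w', hw', i, rfl⟩ := hρ
  exact ⟨w * w', mul_mem hw hw', i, rfl⟩

lemma simple_Phi (i : ι) : Δ i ∈ Phi B Δ := ⟨1, one_mem _, i, rfl⟩

lemma Phi_norm (H : Hyp B Δ) {ρ : V} (hρ : ρ ∈ Phi B Δ) : B ρ ρ = 1 := by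
  obtain ⟨w', hw', i, rfl⟩ := hρ
  rw [B_cox H hw', H.diag]

lemma Phi_neg (H : Hyp B Δ) {ρ : V} (hρ : ρ ∈ Phi B Δ) : -ρ ∈ Phi B Δ := by
  obtain ⟨w', hw', i, rfl⟩ := hρ
  refine ⟨w' * Sr H i, mul_mem hw' (Sr_mem H i), i, ?_⟩
  change w' (Sr H i (Δ i)) = _
  rw [Sr_self, map_neg]

lemma Rf_mem (H : Hyp B Δ) {ρ : V} (hρ : ρ ∈ Phi B Δ) (h1 : B ρ ρ = 1) :
    Rf B ρ h1 ∈ cox B Δ := by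
  obtain ⟨w, hw, i, rfl⟩ := hρ
  have : Rf B (w (Δ i)) h1 = w * Sr H i * w⁻¹ := by
    ext u
    change _ = w (Sr H i (w⁻¹ u))
    rw [conj_Sr H hw, Rf_apply]
    have : w (w⁻¹ u) = u := w.apply_symm_apply u
    rw [this]
  rw [this]
  exact mul_mem (mul_mem hw (Sr_mem H i)) (inv_mem hw)

def htf (Δ : Module.Basis ι ℝ V) : V →ₗ[ℝ] ℝ := ∑ i, Δ.coord i

lemma htf_apply (v : V) : htf Δ v = ∑ i, Δ.repr v i := by
  simp [htf]

lemma B_expand (u v : V) : B u v = ∑ i, Δ.repr v i * B u (Δ i) := by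
  conv_lhs => rw [← Δ.sum_repr v]
  simp only [map_sum, map_smul, smul_eq_mul]

lemma lin_expand (y : V →ₗ[ℝ] ℝ) (v : V) : y v = ∑ i, Δ.repr v i * y (Δ i) := by
  conv_lhs => rw [← Δ.sum_repr v]
  simp only [map_sum, map_smul, smul_eq_mul]

lemma repr_le_htf {v : V} (hv : PosV Δ v) (i : ι) : Δ.repr v i ≤ htf Δ v := by
  rw [htf_apply]
  exact Finset.single_le_sum (f := fun i => Δ.repr v i) (fun j _ => hv j) (Finset.mem_univ i)

lemma htf_lower (H : Hyp B Δ) : ∃ M : ℝ, ∀ ρ ∈ Phi B Δ, 1 ≤ M * (htf Δ ρ)^2 := by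
  refine ⟨∑ i, ∑ j, |B (Δ i) (Δ j)|, ?_⟩
  have key : ∀ ρ ∈ Phi B Δ, PosV Δ ρ → 1 ≤ (∑ i, ∑ j, |B (Δ i) (Δ j)|) * (htf Δ ρ)^2 := by
    intro ρ hρ hp
    rw [← Phi_norm H hρ, B_expand (Δ := Δ) ρ ρ, Finset.sum_mul]
    have h0 : 0 ≤ htf Δ ρ := by rw [htf_apply]; exact Finset.sum_nonneg (fun i _ => hp i)
    apply Finset.sum_le_sum
    intro i _
    rw [H.symm, B_expand (Δ := Δ) (Δ i) ρ, Finset.mul_sum, Finset.sum_mul]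
    apply Finset.sum_le_sum
    intro j _
    have h1 := repr_le_htf hp i
    have h2 := repr_le_htf hp j
    have h3 := mul_le_mul h1 h2 (hp j) h0
    calc Δ.repr ρ i * (Δ.repr ρ j * B (Δ i) (Δ j))
        = (Δ.repr ρ i * Δ.repr ρ j) * B (Δ i) (Δ j) := by ring
      _ ≤ (Δ.repr ρ i * Δ.repr ρ j) * |B (Δ i) (Δ j)| :=
          mul_le_mul_of_nonneg_left (le_abs_self _) (mul_nonneg (hp i) (hp j))
      _ ≤ (htf Δ ρ * htf Δ ρ) * |B (Δ i) (Δ j)| :=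
          mul_le_mul_of_nonneg_right h3 (abs_nonneg _)
      _ = _ := by ring
  intro ρ hρ
  rcases pos_or_neg_s4 H hρ with h | h
  · exact key ρ hρ h
  · have := key (-ρ) (Phi_neg H hρ) h
    simpa using this

lemma htf_pos (H : Hyp B Δ) {ρ : V} (hρ : ρ ∈ posPhi B Δ) : 0 < htf Δ ρ := by
  obtain ⟨M, hM⟩ := htf_lower H
  have h0 : 0 ≤ htf Δ ρ := by rw [htf_apply]; exact Finset.sum_nonneg (fun i _ => hρ.2 i)
  rcases h0.eq_or_lt with h | h
  · have := hM ρ hρ.1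
    rw [← h] at this
    norm_num at this
  · exact h

lemma exists_other (H : Hyp B Δ) {ρ : V} (hρ : ρ ∈ posPhi B Δ) (i : ι) (hne : ρ ≠ Δ i) :
    ∃ j, j ≠ i ∧ 0 < Δ.repr ρ j := by
  by_contra hc
  push Not at hc
  have h0 : ∀ j, j ≠ i → Δ.repr ρ j = 0 := fun j hj => le_antisymm (hc j hj) (hρ.2 j)
  have e : ρ = Δ.repr ρ i • Δ i := by
    conv_lhs => rw [← Δ.sum_repr ρ]
    exact Finset.sum_eq_single i (fun j _ hj => by rw [h0 j hj, zero_smul]) (by simp)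
  have h1 := Phi_norm H hρ.1
  have hp := hρ.2 i
  generalize Δ.repr ρ i = c at e hp
  rw [e] at h1
  simp [H.diag] at h1
  have : c = 1 := by nlinarith
  rw [this, one_smul] at e
  exact hne e

lemma Sr_pos (H : Hyp B Δ) {ρ : V} (hρ : ρ ∈ posPhi B Δ) (i : ι) (hne : ρ ≠ Δ i) :
    Sr H i ρ ∈ posPhi B Δ := by
  obtain ⟨j, hj, hpos⟩ := exists_other H hρ i hne
  have hP := Phi_cox (Sr_mem H i) hρ.1
  refine ⟨hP, ?_⟩
  rcases pos_or_neg_s4 H hP with h | h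
  · exact h
  · exfalso
    have := h j
    rw [Sr_apply] at this
    simp [Finsupp.single_apply, hj.symm] at this
    linarith

lemma N_finite (H : Hyp B Δ) {w : V ≃ₗ[ℝ] V} (hw : w ∈ cox B Δ) :
    {γ ∈ posPhi B Δ | htf Δ (w γ) ≤ 0}.Finite := by
  obtain ⟨l, rfl⟩ := (mem_cox H w).1 hw
  clear hw
  induction l using List.reverseRecOn with
  | nil =>
    convert Set.finite_empty
    ext γ
    simp only [Set.mem_ofPred_eq, Set.mem_empty_iff_false, iff_false, not_and, not_le]
    exact fun h => htf_pos H h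
  | append_singleton l i ih =>
    refine ((Set.finite_singleton (Δ i)).union (ih.image (Sr H i))).subset ?_
    rintro γ ⟨hγ, hle⟩
    by_cases h : γ = Δ i
    · exact Or.inl h
    · right
      refine ⟨Sr H i γ, ⟨Sr_pos H hγ i h, ?_⟩, Sr_Sr H i γ⟩
      rw [Pw_append, Pw_cons, Pw_nil, mul_one] at hle
      exact hle

lemma descend (H : Hyp B Δ) (n : ℕ) : ∀ y : V →ₗ[ℝ] ℝ,
    {γ ∈ posPhi B Δ | y γ ≤ 0}.Finite → {γ ∈ posPhi B Δ | y γ < 0}.ncard = n →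
    ∃ w ∈ cox B Δ, (∀ i, 0 ≤ y (w (Δ i))) ∧ {γ ∈ posPhi B Δ | y (w γ) ≤ 0}.Finite := by
  induction n using Nat.strong_induction_on with
  | _ n ih =>
  intro y hfin hn
  by_cases hc : ∀ i, 0 ≤ y (Δ i)
  · exact ⟨1, one_mem _, hc, hfin⟩
  push Not at hc
  obtain ⟨i, hi⟩ := hc
  have hfin' : {γ ∈ posPhi B Δ | y γ < 0}.Finite :=
    hfin.subset (fun γ h => ⟨h.1, le_of_lt h.2⟩)
  have hmem : Δ i ∈ {γ ∈ posPhi B Δ | y γ < 0} := ⟨⟨simple_Phi i, PosV_simple i⟩, hi⟩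
  set y' : V →ₗ[ℝ] ℝ := y ∘ₗ (Sr H i).toLinearMap with hy'
  have hy'a : ∀ v, y' v = y (Sr H i v) := fun v => rfl
  have h1 : {γ ∈ posPhi B Δ | y' γ ≤ 0}.Finite := by
    refine ((Set.finite_singleton (Δ i)).union (hfin.image (Sr H i))).subset ?_
    rintro γ ⟨hγ, hle⟩
    by_cases h : γ = Δ i
    · exact Or.inl h
    · exact Or.inr ⟨Sr H i γ, ⟨Sr_pos H hγ i h, hle⟩, Sr_Sr H i γ⟩
  have h2 : {γ ∈ posPhi B Δ | y' γ < 0} ⊆ Sr H i '' ({γ ∈ posPhi B Δ | y γ < 0} \ {Δ i}) := by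
    rintro γ ⟨hγ, hle⟩
    have h : γ ≠ Δ i := by
      rintro rfl
      rw [hy'a, Sr_self, map_neg] at hle
      linarith
    refine ⟨Sr H i γ, ⟨⟨Sr_pos H hγ i h, hle⟩, ?_⟩, Sr_Sr H i γ⟩
    intro h3
    rw [Set.mem_singleton_iff] at h3
    have h4 : γ = - Δ i := by rw [← Sr_Sr H i γ, h3, Sr_self]
    have := htf_pos H hγ
    have h5 := htf_pos H hmem.1
    rw [h4, map_neg] at this
    linarith
  have h3 : {γ ∈ posPhi B Δ | y' γ < 0}.ncard < n := by
    calc _ ≤ (Sr H i '' ({γ ∈ posPhi B Δ | y γ < 0} \ {Δ i})).ncard :=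
          Set.ncard_le_ncard h2 ((hfin'.sdiff).image _)
      _ ≤ ({γ ∈ posPhi B Δ | y γ < 0} \ {Δ i}).ncard := Set.ncard_image_le hfin'.sdiff
      _ < _ := by rw [← hn]; exact Set.ncard_sdiff_singleton_lt_of_mem hmem hfin'
  obtain ⟨w, hw, hw1, hw2⟩ := ih _ h3 y' h1 rfl
  exact ⟨Sr H i * w, mul_mem (Sr_mem H i) hw, hw1, hw2⟩

/-- existence of a functional killing a positive definite plane of roots -/
lemma exists_functional_s4 (H : Hyp B Δ) {α ρ : V} (hα : α ∈ Phi B Δ) (hρ : ρ ∈ Phi B Δ)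
    (hb1 : -1 < B α ρ) (hb2 : B α ρ < 1) :
    ∃ y : V →ₗ[ℝ] ℝ, {γ ∈ posPhi B Δ | y γ ≤ 0}.Finite ∧ y α = 0 ∧ y ρ = 0 := by
  set b := B α ρ with hb
  set θ := Real.arccos b with hθ
  have hcos : Real.cos θ = b := Real.cos_arccos hb1.le hb2.le
  have hsin : 0 < Real.sin θ := by
    rw [hθ, Real.sin_arccos]; apply Real.sqrt_pos.2; nlinarith
  have hsq : Real.sin θ ^ 2 = 1 - b ^ 2 := by rw [Real.sin_sq, hcos]
  have hαα := Phi_norm H hα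
  have hρρ := Phi_norm H hρ
  have hρα : B ρ α = b := (H.symm _ _)
  set ν : V := (Real.sin θ)⁻¹ • (ρ - b • α) with hν
  have hρν : ρ = b • α + Real.sin θ • ν := by
    rw [hν, smul_smul, mul_inv_cancel₀ hsin.ne', one_smul]; abel
  have hαν : B α ν = 0 := by
    simp [hν, hαα, ← hb]
  have hρνB : B ρ ν = Real.sin θ := by
    simp only [hν, map_smul, map_sub, hρρ, hρα, smul_eq_mul]
    field_simp
    linarith
  clear_value ν
  set e : ℝ → V := fun t => Real.cos t • α + Real.sin t • ν with he
  set g : V ≃ₗ[ℝ] V := Rf B α hαα * Rf B ρ hρρ with hg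
  have hgm : g ∈ cox B Δ := mul_mem (Rf_mem H hα hαα) (Rf_mem H hρ hρρ)
  have hge : ∀ t, g (e t) = e (t - 2 * θ) := by
    intro t
    change Rf B α hαα (Rf B ρ hρρ (e t)) = _
    have e1 : B ρ (e t) = Real.cos (t - θ) := by
      simp only [he, map_add, map_smul, smul_eq_mul, hρα, hρνB, Real.cos_sub, hcos]
    have e2 : B α (e t) = Real.cos t := by
      simp [he, hαα, hαν]
    rw [Rf_apply, Rf_apply, e1, map_sub, e2, map_smul, ← hb, smul_eq_mul]
    simp only [he]
    rw [hρν, Real.cos_sub, Real.cos_sub, Real.sin_sub, Real.cos_two_mul, Real.sin_two_mul, hcos]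
    have hs2 : Real.sin θ ^ 2 = 1 - b ^ 2 := hsq
    match_scalars
    · linear_combination (0:ℝ)
    · linear_combination (-2 * Real.sin t) * hs2
  have he0 : e 0 = α := by simp [he]
  have heθ : e θ = ρ := by simp only [he]; rw [hρν, hcos]
  set K : AddSubgroup ℝ := AddSubgroup.closure {2 * θ, 2 * Real.pi} with hK
  have hKΦ : ∀ x ∈ K, ∀ t, e t ∈ Phi B Δ ↔ e (t + x) ∈ Phi B Δ := by
    intro x hx
    induction hx using AddSubgroup.closure_induction with
    | mem x hx =>
      intro t
      rcases hx with rfl | rfl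
      · have h1 := hge (t + 2 * θ)
        rw [add_sub_cancel_right] at h1
        constructor
        · intro h
          have h2 := Phi_cox (inv_mem hgm) h
          rw [← h1] at h2
          have h3 : g⁻¹ (g (e (t + 2 * θ))) = e (t + 2 * θ) := g.symm_apply_apply _
          rwa [h3] at h2
        · intro h
          rw [← h1]; exact Phi_cox hgm h
      · simp [he]
    | zero => intro t; simp
    | add x y _ _ hx hy => intro t; rw [hx t, hy (t + x), add_assoc]
    | neg x _ hx => intro t; rw [hx (t + -x), neg_add_cancel_right]
  have hKroot : ∀ x ∈ K, e x ∈ Phi B Δ := by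
    intro x hx
    have := (hKΦ x hx 0).1 (by rw [he0]; exact hα)
    rwa [zero_add] at this
  -- a period
  have hper : ∃ n : ℕ, 0 < n ∧ ∃ p : ℤ, 2 * θ * n = p * (2 * Real.pi) := by
    rcases AddSubgroup.dense_or_cyclic K with hd | ⟨a, ha⟩
    · exfalso
      obtain ⟨M, hM⟩ := htf_lower H
      have hcont : Continuous (fun t => htf Δ (e t)) := by
        simp only [he, map_add, map_smul, smul_eq_mul]
        fun_prop
      have hz : ∃ t1, htf Δ (e t1) = 0 := by
        have h0 : htf Δ (e 0) = - htf Δ (e Real.pi) := by simp [he]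
        have hi := intermediate_value_uIcc (a := (0:ℝ)) (b := Real.pi)
          (f := fun t => htf Δ (e t)) hcont.continuousOn
        have : (0:ℝ) ∈ Set.uIcc (htf Δ (e 0)) (htf Δ (e Real.pi)) := by
          rw [Set.mem_uIcc]
          rcases le_total (htf Δ (e 0)) 0 with h | h
          · left; constructor <;> linarith
          · right; constructor <;> linarith
        obtain ⟨t1, -, h⟩ := hi this
        exact ⟨t1, h⟩
      obtain ⟨t1, ht1⟩ := hz
      have hopen : IsOpen {t | M * (htf Δ (e t))^2 < 1} :=
        isOpen_lt (by fun_prop) continuous_const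
      obtain ⟨x, hx1, hx2⟩ := hd.exists_mem_open hopen ⟨t1, by simp [ht1]⟩
      have := hM _ (hKroot x hx1)
      simp only [Set.mem_ofPred_eq] at hx2
      linarith
    · have h1 : 2 * θ ∈ K := AddSubgroup.subset_closure (by simp)
      have h2 : 2 * Real.pi ∈ K := AddSubgroup.subset_closure (by simp)
      rw [ha, AddSubgroup.mem_closure_singleton] at h1 h2
      obtain ⟨p, hp⟩ := h1
      obtain ⟨m, hm⟩ := h2
      have hpi := Real.pi_pos
      have hm0 : m ≠ 0 := by
        rintro rfl
        simp at hm
      simp only [zsmul_eq_mul] at hp hm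
      refine ⟨m.natAbs, Int.natAbs_pos.2 hm0, ?_⟩
      have hcast : ((m.natAbs : ℕ) : ℝ) = ((m.natAbs : ℤ) : ℝ) := by simp
      rcases Int.natAbs_eq m with h | h
      · refine ⟨p, ?_⟩
        rw [hcast, ← h, ← hm, ← hp]; ring
      · refine ⟨-p, ?_⟩
        have h' : ((m.natAbs : ℕ) : ℤ) = -m := by omega
        rw [hcast, h', ← hm, ← hp]; push_cast; ring
  obtain ⟨n, hn, p, hp⟩ := hper
  have hgk : ∀ k : ℕ, ∀ t, (g ^ k) (e t) = e (t - 2 * θ * k) := by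
    intro k
    induction k with
    | zero => intro t; simp
    | succ k ih =>
      intro t
      rw [pow_succ]
      change (g ^ k) (g (e t)) = _
      rw [hge, ih]
      congr 1; push_cast; ring
  have hgn : ∀ t, (g ^ n) (e t) = e t := by
    intro t
    rw [hgk, hp]
    simp only [he, Real.cos_sub_int_mul_two_pi, Real.sin_sub_int_mul_two_pi]
  set y : V →ₗ[ℝ] ℝ := ∑ k ∈ Finset.range n, htf Δ ∘ₗ (g ^ k).toLinearMap with hy
  have hya : ∀ v, y v = ∑ k ∈ Finset.range n, htf Δ ((g ^ k) v) := by
    intro v; simp [hy]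
  have hyg : ∀ t, y (e (t - 2 * θ)) = y (e t) := by
    intro t
    rw [← hge, hya, hya]
    have h1 := Finset.sum_range_succ (fun k => htf Δ ((g ^ k) (e t))) n
    have h2 := Finset.sum_range_succ' (fun k => htf Δ ((g ^ k) (e t))) n
    have h3 : ∀ k, htf Δ ((g ^ k) (g (e t))) = htf Δ ((g ^ (k+1)) (e t)) := by
      intro k; rw [pow_succ]; rfl
    simp only [h3]
    rw [hgn] at h1
    have h4 : (g ^ 0) (e t) = e t := rfl
    rw [h4] at h2
    linarith
  have hyν : y ν = 0 := by
    have h := hyg θ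
    have : θ - 2 * θ = -θ := by ring
    rw [this] at h
    simp only [he, Real.cos_neg, Real.sin_neg, map_add, map_smul, smul_eq_mul] at h
    have : Real.sin θ * y ν = 0 := by linarith
    exact (mul_eq_zero.1 this).resolve_left hsin.ne'
  have hyα : y α = 0 := by
    have h := hyg (θ + Real.pi / 2)
    have : θ + Real.pi / 2 - 2 * θ = Real.pi / 2 - θ := by ring
    rw [this] at h
    simp only [he, Real.cos_pi_div_two_sub, Real.cos_add_pi_div_two, map_add, map_smul,
      smul_eq_mul, hyν] at h
    have : Real.sin θ * y α = 0 := by linarith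
    exact (mul_eq_zero.1 this).resolve_left hsin.ne'
  refine ⟨y, ?_, hyα, ?_⟩
  · refine (Set.Finite.biUnion (Finset.range n).finite_toSet
      (fun k _ => N_finite H (pow_mem hgm k))).subset ?_
    rintro γ ⟨hγ, hle⟩
    rw [hya] at hle
    simp only [Set.mem_iUnion]
    by_contra hc
    push Not at hc
    have : 0 < ∑ k ∈ Finset.range n, htf Δ ((g ^ k) γ) := by
      apply Finset.sum_pos
      · intro k hk
        by_contra h
        exact hc k hk ⟨hγ, not_lt.1 h⟩
      · simpa using hn.ne'
    linarith
  · rw [hρν, map_add, map_smul, map_smul, hyα, hyν]; simp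

def supp (B : LinearMap.BilinForm ℝ V) (Δ : Module.Basis ι ℝ V) (I : Set ι) : Set V :=
  {γ ∈ posPhi B Δ | ∀ i, i ∉ I → Δ.repr γ i = 0}

lemma values_finite (H : Hyp B Δ) : ∃ F : Set ℝ, F.Finite ∧ ∀ α ∈ Phi B Δ, ∀ ρ ∈ Phi B Δ,
    -1 < B α ρ → B α ρ < 1 → |B α ρ| ∈ F := by
  refine ⟨⋃ I ∈ {I : Set ι | (supp B Δ I).Finite},
    (fun p : V × V => |B p.1 p.2|) '' (supp B Δ I ×ˢ supp B Δ I), ?_, ?_⟩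
  · refine Set.Finite.biUnion (Set.toFinite _) ?_
    intro I hI
    exact (Set.Finite.prod hI hI).image _
  · intro α hα ρ hρ h1 h2
    obtain ⟨y, hfin, hyα, hyρ⟩ := exists_functional_s4 H hα hρ h1 h2
    obtain ⟨w, hw, hpos, hfin2⟩ := descend H _ y hfin rfl
    have key : ∀ γ ∈ Phi B Δ, y γ = 0 → ∃ γ' ∈ supp B Δ {i | y (w (Δ i)) = 0},
        γ = w γ' ∨ γ = - w γ' := by
      have key2 : ∀ γ' ∈ posPhi B Δ, y (w γ') = 0 → γ' ∈ supp B Δ {i | y (w (Δ i)) = 0} := by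
        intro γ' hγ' hy
        refine ⟨hγ', ?_⟩
        intro i hi
        have h := lin_expand (Δ := Δ) (y ∘ₗ w.toLinearMap) γ'
        simp only [LinearMap.comp_apply, LinearEquiv.coe_coe] at h
        rw [hy] at h
        have := (Finset.sum_eq_zero_iff_of_nonneg
          (fun i _ => mul_nonneg (hγ'.2 i) (hpos i))).1 h.symm i (Finset.mem_univ i)
        exact (mul_eq_zero.1 this).resolve_right hi
      intro γ hγ hy
      have hwγ : w (w⁻¹ γ) = γ := w.apply_symm_apply γ
      have hP := Phi_cox (inv_mem hw) hγ
      rcases pos_or_neg_s4 H hP with h | h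
      · exact ⟨w⁻¹ γ, key2 _ ⟨hP, h⟩ (by rw [hwγ, hy]), Or.inl hwγ.symm⟩
      · refine ⟨-(w⁻¹ γ), key2 _ ⟨Phi_neg H hP, h⟩ (by rw [map_neg, hwγ, map_neg, hy, neg_zero]),
          Or.inr ?_⟩
        rw [map_neg, hwγ, neg_neg]
    obtain ⟨α', hα', ha⟩ := key α hα hyα
    obtain ⟨ρ', hρ', hr⟩ := key ρ hρ hyρ
    simp only [Set.mem_iUnion]
    refine ⟨{i | y (w (Δ i)) = 0}, ?_, (α', ρ'), ⟨hα', hρ'⟩, ?_⟩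
    · refine hfin2.subset ?_
      rintro γ ⟨hγ, hs⟩
      refine ⟨hγ, ?_⟩
      have h := lin_expand (Δ := Δ) (y ∘ₗ w.toLinearMap) γ
      simp only [LinearMap.comp_apply, LinearEquiv.coe_coe] at h
      rw [h]
      apply le_of_eq
      apply Finset.sum_eq_zero
      intro i _
      by_cases hi : y (w (Δ i)) = 0
      · rw [hi, mul_zero]
      · rw [hs i hi, zero_mul]
    · have := B_cox H hw α' ρ'
      rcases ha with rfl | rfl <;> rcases hr with rfl | rfl <;> simp [this]

lemma gap (H : Hyp B Δ) : ∃ κ : ℝ, 0 < κ ∧ ∀ α ∈ Phi B Δ, ∀ ρ ∈ Phi B Δ,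
    0 < B α ρ → κ ≤ B α ρ := by
  obtain ⟨F, hF, hv⟩ := values_finite H
  have : ∃ κ : ℝ, 0 < κ ∧ ∀ x ∈ F, 0 < x → κ ≤ x := by
    have hfin : (insert 1 {x ∈ F | 0 < x}).Finite := (hF.subset (fun x h => h.1)).insert 1
    obtain ⟨κ, hκ, hmin⟩ := hfin.exists_minimal ⟨1, by simp⟩
    refine ⟨κ, ?_, ?_⟩
    · rcases hκ with rfl | h
      · exact one_pos
      · exact h.2
    · intro x hx hx0
      have := hmin (Or.inr ⟨hx, hx0⟩)
      by_contra hc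
      exact hc (this (not_le.1 hc).le)
  obtain ⟨κ, hκ, hκF⟩ := this
  refine ⟨min κ 1, lt_min hκ one_pos, ?_⟩
  intro α hα ρ hρ h
  by_cases h1 : B α ρ < 1
  · have := hv α hα ρ hρ (by linarith) h1
    rw [abs_of_pos h] at this
    exact (min_le_left _ _).trans (hκF _ this h)
  · exact (min_le_right _ _).trans (not_lt.1 h1)

lemma hasExpr_step (H : Hyp B Δ) (i : ι) {ρ : V} {k : ℕ} (h : hasExpr B Δ ρ k) :
    hasExpr B Δ (Sr H i ρ) (k+1) := by
  obtain ⟨l, hl, he, j, rfl⟩ := h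
  refine ⟨Sr H i :: l, by simp [hl], ?_, j, by rw [List.prod_cons]; rfl⟩
  intro e hm
  rcases List.mem_cons.1 hm with rfl | h
  · exact (mem_simple H _).2 ⟨i, rfl⟩
  · exact he e h

lemma nsq_step (H : Hyp B Δ) (i : ι) (ρ : V) :
    ∑ j, (Δ.repr (Sr H i ρ) j)^2 = ∑ j, (Δ.repr ρ j)^2
      - 4 * B (Δ i) ρ * Δ.repr ρ i + 4 * (B (Δ i) ρ)^2 := by
  classical
  have : ∀ j, (Δ.repr (Sr H i ρ) j)^2 = (Δ.repr ρ j)^2 +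
      (if j = i then - 4 * B (Δ i) ρ * Δ.repr ρ i + 4 * (B (Δ i) ρ)^2 else 0) := by
    intro j
    rw [Sr_apply]
    by_cases h : j = i
    · subst h; simp; ring
    · simp [Finsupp.single_apply, h, Ne.symm h]
  simp only [this, Finset.sum_add_distrib, Finset.sum_ite_eq', Finset.mem_univ, if_true]
  ring

lemma main_bound (H : Hyp B Δ) (κ : ℝ) (hκ : 0 < κ)
    (hgap : ∀ α ∈ Phi B Δ, ∀ ρ ∈ Phi B Δ, 0 < B α ρ → κ ≤ B α ρ) (N : ℕ) :
    ∀ ρ ∈ posPhi B Δ, ∑ j, (Δ.repr ρ j)^2 < N * (4 * κ^2) →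
      ∃ k : ℕ, hasExpr B Δ ρ k ∧ 1 + (4 * κ^2) * k ≤ ∑ j, (Δ.repr ρ j)^2 := by
  induction N with
  | zero =>
    intro ρ _ h
    have : 0 ≤ ∑ j, (Δ.repr ρ j)^2 := Finset.sum_nonneg (fun i _ => sq_nonneg _)
    simp at h
    linarith
  | succ N ih =>
    intro ρ hρ hlt
    by_cases hs : ∃ i, ρ = Δ i
    · obtain ⟨i, rfl⟩ := hs
      classical
      refine ⟨0, ⟨[], rfl, by simp, i, rfl⟩, ?_⟩
      simp [Finsupp.single_apply, ite_pow]
    · push Not at hs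
      have hex : ∃ i, 0 < B (Δ i) ρ := by
        by_contra hc
        push Not at hc
        have h1 := Phi_norm H hρ.1
        rw [B_expand (Δ := Δ) ρ ρ] at h1
        have : ∑ i, Δ.repr ρ i * B ρ (Δ i) ≤ 0 := by
          apply Finset.sum_nonpos
          intro i _
          exact mul_nonpos_of_nonneg_of_nonpos (hρ.2 i) (by rw [H.symm]; exact hc i)
        linarith
      obtain ⟨i, hi⟩ := hex
      have hb := hgap _ (simple_Phi i) _ hρ.1 hi
      have hp := Sr_pos H hρ i (hs i)
      have hn := nsq_step H i ρ
      have hc := hp.2 i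
      rw [Sr_apply] at hc
      simp at hc
      have hdec : ∑ j, (Δ.repr (Sr H i ρ) j)^2 + 4 * κ^2 ≤ ∑ j, (Δ.repr ρ j)^2 := by
        rw [hn]
        nlinarith
      obtain ⟨k, hk, hk2⟩ := ih _ hp (by push_cast at hlt; linarith)
      refine ⟨k+1, ?_, by push_cast; linarith⟩
      have := hasExpr_step H i hk
      rwa [Sr_Sr] at this

end Helpers

/-- For the Euclidean norm making `Δ` orthonormal (so `‖ρ‖² = ∑ᵢ ρᵢ²` in `Δ`-coordinates),
there is `λ > 0` with `‖ρ‖² ≥ 1 + λ (dp(ρ) - 1)` for every positive root `ρ`. -/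
theorem statement4 (B : LinearMap.BilinForm ℝ V) (Δ : Module.Basis ι ℝ V)
    (hsymm : ∀ u v : V, B u v = B v u)
    (hdiag : ∀ i : ι, B (Δ i) (Δ i) = 1)
    (hoff : ∀ i j : ι, i ≠ j → B (Δ i) (Δ j) ≤ -1 ∨
      ∃ k : ℕ, 2 ≤ k ∧ B (Δ i) (Δ j) = -Real.cos (Real.pi / (k : ℝ))) :
    ∃ lam : ℝ, 0 < lam ∧ ∀ ρ ∈ posPhi B Δ,
      1 + lam * ((depth B Δ ρ : ℝ) - 1) ≤ ∑ i : ι, (Δ.repr ρ i) ^ 2 := by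
  have H : Hyp B Δ := ⟨hsymm, hdiag, hoff⟩
  obtain ⟨κ, hκ, hgap⟩ := gap H
  have hpos : 0 < 4 * κ ^ 2 := by positivity
  refine ⟨4 * κ ^ 2, hpos, ?_⟩
  intro ρ hρ
  obtain ⟨N, hN⟩ := exists_nat_gt ((∑ j, (Δ.repr ρ j)^2) / (4 * κ^2))
  rw [div_lt_iff₀ hpos] at hN
  obtain ⟨k, hk, hk2⟩ := main_bound H κ hκ hgap N ρ hρ hN
  have h1 : sInf {k : ℕ | hasExpr B Δ ρ k} ≤ k := Nat.sInf_le hk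
  have h2 : ((sInf {k : ℕ | hasExpr B Δ ρ k} : ℕ) : ℝ) ≤ k := by exact_mod_cast h1
  unfold depth
  push_cast
  nlinarith
end
end
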